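/- Fix a ∈ ℤ and set a* = |a|+1 if |a| ≤ 1 and a* = |a| if |a| ≥ 2. Then for any f ∈ Ḣ^{a*−1}_⋄ and B > 0, there exists a constant K = K(T, ν, ‖f‖_{Ḣ^{a*−1}}, a, B) > 0 such that for all θ, θ' ∈ Ḣ^{a*}_⋄ with ‖θ‖_{Ḣ^{a*}} + ‖θ'‖_{Ḣ^{a*}} ≤ B, the Navier–Stokes solutions satisfy sup_{0≤t≤T} ‖u_θ(t) − u_{θ'}(t)‖²_{Ḣ^a} + ∫₀ᵀ ‖u_θ(t) − u_{θ'}(t)‖²_{Ḣ^{a+1}} dt ≤ K ‖θ − θ'‖²_{Ḣ^a}. -/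

import Mathlib

open MeasureTheory Set
open scoped BigOperators

noncomputable section

namespace NS2D

/-- Nonzero Fourier frequencies of the 2D torus `Ω = 𝕋²`. -/
def Freq : Type := {k : ℤ × ℤ // k ≠ 0}

/-- Squared Euclidean modulus `|k|²` of a frequency. -/
def knormSq (k : Freq) : ℝ := (k.1.1 : ℝ) ^ 2 + (k.1.2 : ℝ) ^ 2

/-- Eigenvalue `λ_k = 4π²|k|²` of the periodic Laplacian `−Δ`. -/
def lam (k : Freq) : ℝ := 4 * Real.pi ^ 2 * knormSq k

/-- A divergence-free mean-zero vector field `u ∈ Ḣ_⋄` (or, more generally, an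
element of the scale `Ḣ^α_⋄`) on the torus is represented by its Fourier
coefficients `c k` along the orthonormal basis
`e_k(x) = |k|⁻¹ (k₂, −k₁) exp(2πi k·x)` of divergence-free fields. -/
abbrev Coef : Type := Freq → ℂ

/-- Negation of a frequency. -/
def fneg (k : Freq) : Freq := ⟨-k.1, neg_ne_zero.mpr k.2⟩

/-- The conjugacy condition expressing that the coefficients `c` represent a
real-valued vector field (note `e_{−k} = − conj e_k`). -/
def IsReal (c : Coef) : Prop := ∀ k, c (fneg k) = - (starRingEnd ℂ) (c k)

/-- Squared homogeneous Sobolev norm `‖·‖²_{Ḣ^α} = Σ_k λ_k^α |c k|²`. -/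
def hSq (α : ℝ) (c : Coef) : ℝ := ∑' k, lam k ^ α * ‖c k‖ ^ 2

/-- Homogeneous Sobolev norm `‖·‖_{Ḣ^α}`. -/
def hN (α : ℝ) (c : Coef) : ℝ := Real.sqrt (hSq α c)

/-- Finiteness of the `Ḣ^α`-norm. -/
def FinH (α : ℝ) (c : Coef) : Prop := Summable fun k => lam k ^ α * ‖c k‖ ^ 2

/-- Membership in `Ḣ^α_⋄` (real-valued field with finite `Ḣ^α`-norm). -/
def MemH (α : ℝ) (c : Coef) : Prop := IsReal c ∧ FinH α c

/-- Membership in `Ḣ^∞_⋄ = C^∞(Ω)² ∩ Ḣ_⋄`: all Sobolev norms are finite. -/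
def MemHinf (c : Coef) : Prop := ∀ α : ℝ, MemH α c

/-- Real `Ḣ^α` inner product `⟨·,·⟩_{Ḣ^α}` (for real-valued fields). -/
def hInner (α : ℝ) (c d : Coef) : ℝ := ∑' k, lam k ^ α * (c k * (starRingEnd ℂ) (d k)).re

/-- The `L²` inner product. -/
def innerC (c d : Coef) : ℂ := ∑' k, c k * (starRingEnd ℂ) (d k)

/-- The unit vector `(k₂, −k₁)/|k|` spanning the divergence-free direction at
frequency `k`. -/
def evec (k : Freq) : ℝ × ℝ :=
  ((k.1.2 : ℝ) / Real.sqrt (knormSq k), -((k.1.1 : ℝ)) / Real.sqrt (knormSq k))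

/-- Euclidean dot product on `ℝ²`. -/
def dotR (a b : ℝ × ℝ) : ℝ := a.1 * b.1 + a.2 * b.2

/-- A frequency as a real vector. -/
def fvec (k : Freq) : ℝ × ℝ := ((k.1.1 : ℝ), (k.1.2 : ℝ))

/-- Fourier coefficients (along the basis `e_k`) of the Leray-projected
transport nonlinearity `B[u,v] = P[(u·∇)v]`:
`(B[u,v])^(k) · ē_k = 2πi Σ_{m+n=k, n≠0} c_m d_n (e_m·n)(e_n·e_k)`. -/
def Bc (c d : Coef) : Coef := fun k =>
  (((2 * Real.pi : ℝ) : ℂ) * Complex.I) *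
    ∑' m : Freq,
      if h : k.1 - m.1 ≠ 0 then
        c m * d ⟨k.1 - m.1, h⟩ *
          (((dotR (evec m) (fvec ⟨k.1 - m.1, h⟩) *
            dotR (evec ⟨k.1 - m.1, h⟩) (evec k) : ℝ)) : ℂ)
      else 0

/-- The Laplacian `Δ` acting on the scale: `(Δu)^(k) = −λ_k û(k)`. -/
def lapC (c : Coef) : Coef := fun k => -((lam k : ℝ) : ℂ) * c k

/-- Continuity of a trajectory `t ↦ u(t)`, `t ∈ [0,T]`, for the `Ḣ^α`-norm:
`u ∈ C([0,T], Ḣ^α_⋄)`. -/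
def ContH (α : ℝ) (T : ℝ) (u : ℝ → Coef) : Prop :=
  ∀ t ∈ Icc (0:ℝ) T, ∀ ε > 0, ∃ δ > 0, ∀ s ∈ Icc (0:ℝ) T,
    |s - t| < δ → hN α (u s - u t) < ε

/-- Membership `u ∈ L²([0,T], Ḣ^α_⋄)`. -/
def MemL2H (α : ℝ) (T : ℝ) (u : ℝ → Coef) : Prop :=
  (∀ t ∈ Ioc (0:ℝ) T, MemH α (u t)) ∧
    IntegrableOn (fun t => hSq α (u t)) (Ioc 0 T)

/-- `u` is a strong solution on `[0,T]` of the (Leray-projected) periodic 2D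
Navier–Stokes equations `du/dt + νAu + B[u,u] = f`, `u(0) = θ`, posed in `Ḣ_⋄`:
the Fourier coefficients satisfy the corresponding system of ODEs on `(0,T]`,
the trajectory is continuous into `Ḣ¹_⋄` (in particular at `t = 0`), and lies
in `L²([0,T], Ḣ²_⋄)`. -/
structure IsNSSol (ν : ℝ) (f : Coef) (T : ℝ) (θ : Coef) (u : ℝ → Coef) : Prop where
  init : u 0 = θ
  real : ∀ t ∈ Icc (0:ℝ) T, IsReal (u t)
  deriv : ∀ (k : Freq), ∀ t ∈ Ioc (0:ℝ) T,
    HasDerivAt (fun s => u s k)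
      (f k - ((ν * lam k : ℝ) : ℂ) * u t k - Bc (u t) (u t) k) t
  contH1 : ContH 1 T u
  memL2H2 : MemL2H 2 T u

/-- `U` solves the linear parabolic equation
`dU/dt − νΔU + B[u₀, U] + B[U, u₁] = g`, `U(0) = ξ`, on `[0,T]`. -/
structure IsLinPSol (ν : ℝ) (u₀ u₁ : ℝ → Coef) (g : ℝ → Coef) (T : ℝ) (ξ : Coef)
    (U : ℝ → Coef) : Prop where
  init : U 0 = ξ
  real : ∀ t ∈ Icc (0:ℝ) T, IsReal (U t)
  deriv : ∀ (k : Freq), ∀ t ∈ Ioc (0:ℝ) T,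
    HasDerivAt (fun s => U s k)
      (g t k - ((ν * lam k : ℝ) : ℂ) * U t k - Bc (u₀ t) (U t) k - Bc (U t) (u₁ t) k) t

/-- `U = 𝕀_θ[ξ]` solves the linearisation of Navier–Stokes along the
trajectory `u₀`: `dU/dt − νΔU + B[u₀,U] + B[U,u₀] = 0`, `U(0) = ξ`. -/
def IsLinSol (ν : ℝ) (u₀ : ℝ → Coef) (T : ℝ) (ξ : Coef) (U : ℝ → Coef) : Prop :=
  IsLinPSol ν u₀ u₀ (fun _ => 0) T ξ U

/-- The heat semigroup `S_t = e^{νtΔ}` on the scale `Ḣ^α_⋄`. -/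
def heatS (ν t : ℝ) (c : Coef) : Coef := fun k =>
  ((Real.exp (-(ν * lam k * t)) : ℝ) : ℂ) * c k

/-- Duhamel representation of the solution of the periodic heat equation
`du/dt − νΔu = g`, `u(0) = h`. -/
def heatSol (ν : ℝ) (g : ℝ → Coef) (h : Coef) : ℝ → Coef := fun t k =>
  ((Real.exp (-(ν * lam k * t)) : ℝ) : ℂ) *
    (h k + ∫ s in (0:ℝ)..t, ((Real.exp (ν * lam k * s) : ℝ) : ℂ) * g s k)

/-- Real-linearity of a map on the coefficient space. -/
def IsLinMap (Λ : Coef → Coef) : Prop :=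
  (∀ c d, Λ (c + d) = Λ c + Λ d) ∧ ∀ (r : ℝ) (c : Coef), Λ (r • c) = r • Λ c

/-- `Λ` defines a compact (linear) operator `Ḣ^α_⋄ → Ḣ^β_⋄`: it is linear,
maps `Ḣ^α_⋄` into `Ḣ^β_⋄`, and the image of the `Ḣ^α`-unit ball is totally
bounded for the `Ḣ^β`-norm. -/
def IsCompactOp (α β : ℝ) (Λ : Coef → Coef) : Prop :=
  IsLinMap Λ ∧ (∀ c, MemH α c → MemH β (Λ c)) ∧
    ∀ ε > 0, ∃ S : Finset Coef, ∀ c, MemH α c → hN α c ≤ 1 →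
      ∃ s ∈ S, hN β (Λ c - s) < ε

/-- The index `a* = |a|+1` if `|a| ≤ 1`, `a* = |a|` if `|a| ≥ 2`. -/
def astar (a : ℤ) : ℤ := if |a| ≤ 1 then |a| + 1 else |a|

/-- `i`-th component of the unit vector `evec k`. -/
def evecC (i : Fin 2) (k : Freq) : ℝ := if i = 0 then (evec k).1 else (evec k).2

/-- Fourier coefficients (over all of `ℤ²`) of the scalar component `u_i` of a
divergence-free field with coefficients `c`. -/
def compCoef (i : Fin 2) (c : Coef) : ℤ × ℤ → ℂ := fun n =>
  if h : n ≠ 0 then c ⟨n, h⟩ * ((evecC i ⟨n, h⟩ : ℝ) : ℂ) else 0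

/-- Convolution: Fourier coefficients of a pointwise product of two scalar
functions. -/
def convC (F G : ℤ × ℤ → ℂ) : ℤ × ℤ → ℂ := fun n => ∑' m : ℤ × ℤ, F m * G (n - m)

/-- Squared homogeneous Sobolev norm of a scalar function given by its Fourier
coefficients over `ℤ²`. -/
def hSqScalar (α : ℝ) (F : ℤ × ℤ → ℂ) : ℝ := ∑' k : Freq, lam k ^ α * ‖F k.1‖ ^ 2

/-- `‖u vᵀ‖²_{Ḣ^α} = Σ_{i,j=1}^2 ‖u_i v_j‖²_{Ḣ^α}`. -/
def hSqMat (α : ℝ) (c d : Coef) : ℝ :=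
  ∑ i : Fin 2, ∑ j : Fin 2, hSqScalar α (convC (compCoef i c) (compCoef j d))

/-- The character `exp(2πi k·x)`. -/
def efun (k : Freq) (x : ℝ × ℝ) : ℂ :=
  Complex.exp ((((2 * Real.pi : ℝ)) : ℂ) * Complex.I *
    ((k.1.1 : ℂ) * (x.1 : ℂ) + (k.1.2 : ℂ) * (x.2 : ℂ)))

/-- Pointwise evaluation of the `i`-th component of the field. -/
def evalComp (i : Fin 2) (c : Coef) (x : ℝ × ℝ) : ℂ :=
  ∑' k, c k * ((evecC i k : ℝ) : ℂ) * efun k x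

/-- Supremum norm (`C⁰`-norm) of the field. -/
def c0N (c : Coef) : ℝ := ⨆ x : ℝ × ℝ, max ‖evalComp 0 c x‖ ‖evalComp 1 c x‖

/-- The partial derivative `∂_j` acting on divergence-free fields. -/
def pderiv (j : Fin 2) (c : Coef) : Coef := fun k =>
  (((2 * Real.pi : ℝ) : ℂ) * Complex.I) *
    (if j = 0 then ((k.1.1 : ℤ) : ℂ) else ((k.1.2 : ℤ) : ℂ)) * c k

/-- `C¹`-norm of the field. -/
def c1N (c : Coef) : ℝ := c0N c + c0N (pderiv 0 c) + c0N (pderiv 1 c)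

/-- Norm of the multiplier space `B^ℓ`: `C^ℓ(Ω)²` for `ℓ ≤ 1` and `Ḣ^ℓ` for
`ℓ ≥ 2`. -/
def bN (ℓ : ℕ) (c : Coef) : ℝ :=
  if ℓ = 0 then c0N c else if ℓ = 1 then c1N c else hN (ℓ : ℝ) c

end NS2D

namespace NS2D
open scoped ENNReal

/-- Grönwall-type lemma with an integrable coefficient. -/
lemma gron {T A : ℝ} (hT : 0 ≤ T) (hA : 0 ≤ A) {α E : ℝ → ℝ}
    (hα : IntervalIntegrable α volume 0 T)
    (hαE : IntervalIntegrable (fun t => α t * E t) volume 0 T)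
    (hα0 : ∀ t, 0 ≤ α t) (hE0 : ∀ t, 0 ≤ E t)
    (h : ∀ t ∈ Icc (0:ℝ) T, E t ≤ A + ∫ s in (0:ℝ)..t, α s * E s) (n : ℕ) :
    ∀ t ∈ Icc (0:ℝ) T, (∫ s in (0:ℝ)..t, α s) ≤ n / 2 →
      A + (∫ s in (0:ℝ)..t, α s * E s) ≤ 2 ^ n * A := by
  have sub : ∀ x ∈ Icc (0:ℝ) T, ∀ y ∈ Icc (0:ℝ) T, uIcc x y ⊆ uIcc 0 T := by
    intro x hx y hy
    rw [uIcc_of_le hT]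
    exact uIcc_subset_Icc hx hy
  have h0m : (0:ℝ) ∈ Icc (0:ℝ) T := ⟨le_rfl, hT⟩
  -- one step
  have step : ∀ τ ∈ Icc (0:ℝ) T, ∀ t ∈ Icc (0:ℝ) T, τ ≤ t →
      A + (∫ s in (0:ℝ)..t, α s * E s) ≤ A + (∫ s in (0:ℝ)..τ, α s * E s) +
        (∫ s in τ..t, α s) * (A + ∫ s in (0:ℝ)..t, α s * E s) := by
    intro τ hτ t ht hle
    have i1 := hαE.mono_set (sub 0 h0m τ hτ)
    have i2 := hαE.mono_set (sub τ hτ t ht)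
    have i3 := hα.mono_set (sub τ hτ t ht)
    rw [← intervalIntegral.integral_add_adjacent_intervals i1 i2]
    have : (∫ s in τ..t, α s * E s) ≤
        ∫ s in τ..t, α s * (A + ∫ s in (0:ℝ)..t, α s * E s) := by
      apply intervalIntegral.integral_mono_on hle i2 (i3.mul_const _)
      intro s hs
      have hs' : s ∈ Icc (0:ℝ) T := ⟨hτ.1.trans hs.1, hs.2.trans ht.2⟩
      apply mul_le_mul_of_nonneg_left _ (hα0 s)
      refine (h s hs').trans ?_
      have j1 := hαE.mono_set (sub 0 h0m s hs')
      have j2 := hαE.mono_set (sub s hs' t ht)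
      rw [← intervalIntegral.integral_add_adjacent_intervals j1 j2]
      have := intervalIntegral.integral_nonneg (μ := volume) hs.2
        (fun x _ => mul_nonneg (hα0 x) (hE0 x))
      linarith
    rw [intervalIntegral.integral_mul_const,
      ← intervalIntegral.integral_add_adjacent_intervals i1 i2] at this
    linarith
  induction n with
  | zero =>
    intro t ht hφ
    have hs := step 0 h0m t ht ht.1
    have h0 : 0 ≤ ∫ s in (0:ℝ)..t, α s * E s := intervalIntegral.integral_nonneg ht.1
        (fun x _ => mul_nonneg (hα0 x) (hE0 x))
    rw [intervalIntegral.integral_same] at hs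
    simp only [Nat.cast_zero, zero_div] at hφ
    have : (∫ s in (0:ℝ)..t, α s) * (A + ∫ s in (0:ℝ)..t, α s * E s) ≤ 0 :=
      mul_nonpos_of_nonpos_of_nonneg hφ (by linarith)
    simp only [pow_zero, one_mul]
    linarith
  | succ n ih =>
    intro t ht hφ
    have h0 : ∀ t ∈ Icc (0:ℝ) T, 0 ≤ ∫ s in (0:ℝ)..t, α s * E s := fun t ht =>
      intervalIntegral.integral_nonneg ht.1 (fun x _ => mul_nonneg (hα0 x) (hE0 x))
    have hpow : (2:ℝ) ^ (n+1) * A = 2 * (2 ^ n * A) := by ring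
    rcases le_total (∫ s in (0:ℝ)..t, α s) (n / 2) with hc | hc
    · have := ih t ht hc
      have := h0 t ht
      linarith
    · have hcont : ContinuousOn (fun x => ∫ s in (0:ℝ)..x, α s) (Icc 0 t) := by
        have := intervalIntegral.continuousOn_primitive_interval'
          (hα.mono_set (sub 0 h0m t ht)) (left_mem_uIcc)
        rwa [uIcc_of_le ht.1] at this
      have hmem : (n:ℝ)/2 ∈ Icc (∫ s in (0:ℝ)..0, α s) (∫ s in (0:ℝ)..t, α s) := by
        rw [intervalIntegral.integral_same]; exact ⟨by positivity, hc⟩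
      obtain ⟨τ, hτ, hτe⟩ := intermediate_value_Icc ht.1 hcont hmem
      simp only at hτe
      have hτT : τ ∈ Icc (0:ℝ) T := ⟨hτ.1, hτ.2.trans ht.2⟩
      have h1 := ih τ hτT hτe.le
      have h2 := step τ hτT t ht hτ.2
      have h3 := intervalIntegral.integral_add_adjacent_intervals
        (hα.mono_set (sub 0 h0m τ hτT)) (hα.mono_set (sub τ hτT t ht))
      push_cast at hφ
      have h4 : (∫ s in τ..t, α s) ≤ 1/2 := by linarith
      have h5 := h0 t ht
      have h6 := mul_le_mul_of_nonneg_right h4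
        (show 0 ≤ A + ∫ s in (0:ℝ)..t, α s * E s by linarith)
      linarith

/-! ### Sums in `ℝ≥0∞` -/

lemma amgm (x y : ℝ≥0∞) : 2 * (x * y) ≤ x ^ 2 + y ^ 2 := by
  by_cases hx : x = ⊤
  · simp [hx]
  by_cases hy : y = ⊤
  · simp [hy]
  lift x to NNReal using hx
  lift y to NNReal using hy
  norm_cast
  have := two_mul_le_add_sq x y
  rwa [mul_assoc] at this

lemma add_sq_le (x y : ℝ≥0∞) : (x + y) ^ 2 ≤ 2 * x ^ 2 + 2 * y ^ 2 := by
  have := amgm x y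
  calc (x + y) ^ 2 = x ^ 2 + y ^ 2 + 2 * (x * y) := by ring
    _ ≤ x ^ 2 + y ^ 2 + (x ^ 2 + y ^ 2) := by gcongr
    _ = _ := by ring

lemma cs {ι : Type*} (x y : ι → ℝ≥0∞) :
    (∑' i, x i * y i) ^ 2 ≤ (∑' i, x i ^ 2) * ∑' i, y i ^ 2 := by
  have h1 : 2 * (∑' i, x i * y i) ^ 2 ≤ 2 * ((∑' i, x i ^ 2) * ∑' i, y i ^ 2) := by
    calc 2 * (∑' i, x i * y i) ^ 2
        = ∑' i, ∑' j, 2 * ((x i * y j) * (x j * y i)) := by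
          rw [sq, ← ENNReal.tsum_mul_right, ← ENNReal.tsum_mul_left]
          congr 1; ext i
          rw [← ENNReal.tsum_mul_left, ← ENNReal.tsum_mul_left]
          congr 1; ext j; ring
      _ ≤ ∑' i, ∑' j, ((x i * y j) ^ 2 + (x j * y i) ^ 2) :=
          ENNReal.tsum_le_tsum fun i => ENNReal.tsum_le_tsum fun j => amgm _ _
      _ = (∑' i, ∑' j, (x i * y j) ^ 2) + ∑' i, ∑' j, (x j * y i) ^ 2 := by
          rw [← ENNReal.tsum_add]
          congr 1; ext i
          rw [ENNReal.tsum_add]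
      _ = (∑' i, ∑' j, (x i * y j) ^ 2) + ∑' i, ∑' j, (x i * y j) ^ 2 := by
          congr 1; rw [ENNReal.tsum_comm]
      _ = 2 * ((∑' i, x i ^ 2) * ∑' i, y i ^ 2) := by
          rw [← two_mul]
          congr 1
          rw [← ENNReal.tsum_mul_right]
          congr 1; ext i
          rw [← ENNReal.tsum_mul_left]
          congr 1; ext j; ring
  exact (ENNReal.mul_le_mul_iff_right (by norm_num) (by norm_num)).1 h1

/-- Convolution of nonnegative sequences. -/
def conv (X Y : ℤ × ℤ → ℝ≥0∞) (k : ℤ × ℤ) : ℝ≥0∞ := ∑' m, X m * Y (k - m)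

lemma conv_comm (X Y : ℤ × ℤ → ℝ≥0∞) (k : ℤ × ℤ) : conv X Y k = conv Y X k := by
  unfold conv
  rw [← (Equiv.subLeft k).tsum_eq]
  congr 1; ext m
  simp [mul_comm]

lemma tsum_shift (Y : ℤ × ℤ → ℝ≥0∞) (k : ℤ × ℤ) : ∑' m, Y (k - m) = ∑' m, Y m :=
  (Equiv.subLeft k).tsum_eq Y

lemma tsum_shift' (Y : ℤ × ℤ → ℝ≥0∞) (k : ℤ × ℤ) : ∑' m, Y (m - k) = ∑' m, Y m :=
  (Equiv.subRight k).tsum_eq Y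

lemma conv_sq_le (X Y : ℤ × ℤ → ℝ≥0∞) (k : ℤ × ℤ) :
    conv X Y k ^ 2 ≤ (∑' m, X m ^ 2) * ∑' m, Y m ^ 2 := by
  unfold conv
  refine (cs _ _).trans ?_
  rw [tsum_shift (fun m => Y m ^ 2) k]

lemma young (X Y : ℤ × ℤ → ℝ≥0∞) :
    ∑' k, conv X Y k ^ 2 ≤ (∑' m, X m) ^ 2 * ∑' m, Y m ^ 2 := by
  have h1 : ∀ k, conv X Y k ^ 2 ≤ (∑' m, X m) * ∑' m, X m * Y (k - m) ^ 2 := by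
    intro k
    have := cs (fun m => (X m) ^ (1/2 : ℝ)) (fun m => X m ^ (1/2:ℝ) * Y (k - m))
    have e : ∀ m, (X m ^ (1/2:ℝ)) ^ 2 = X m := by
      intro m
      rw [← ENNReal.rpow_natCast, ← ENNReal.rpow_mul]; norm_num
    unfold conv
    calc (∑' m, X m * Y (k - m)) ^ 2
        = (∑' m, X m ^ (1/2:ℝ) * (X m ^ (1/2:ℝ) * Y (k - m))) ^ 2 := by
          congr 2; ext m; rw [← mul_assoc, ← sq, e]
      _ ≤ _ := this
      _ = _ := by
          simp only [mul_pow, e]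
  calc ∑' k, conv X Y k ^ 2 ≤ ∑' k, (∑' m, X m) * ∑' m, X m * Y (k - m) ^ 2 :=
        ENNReal.tsum_le_tsum h1
    _ = (∑' m, X m) * ∑' m, ∑' k, X m * Y (k - m) ^ 2 := by
        rw [ENNReal.tsum_mul_left, ENNReal.tsum_comm]
    _ = (∑' m, X m) * ∑' m, X m * ∑' k, Y k ^ 2 := by
        congr 2; ext m
        rw [ENNReal.tsum_mul_left, tsum_shift' (fun k => Y k ^ 2) m]
    _ = _ := by rw [ENNReal.tsum_mul_right]; ring

instance : Countable Freq := by unfold Freq; infer_instance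

/-- `λ` on the whole lattice. -/
def lamG (n : ℤ × ℤ) : ℝ := 4 * Real.pi ^ 2 * ((n.1 : ℝ) ^ 2 + (n.2 : ℝ) ^ 2)

lemma lam_eq (k : Freq) : lam k = lamG k.1 := rfl

lemma four_pi_sq : (1:ℝ) ≤ 4 * Real.pi ^ 2 := by nlinarith [Real.pi_gt_three]

lemma one_le_nsq {n : ℤ × ℤ} (h : n ≠ 0) : (1:ℝ) ≤ (n.1 : ℝ) ^ 2 + (n.2 : ℝ) ^ 2 := by
  have : (1:ℤ) ≤ n.1 ^ 2 + n.2 ^ 2 := by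
    by_contra hc
    apply h
    have h1 : n.1 ^ 2 = 0 := by nlinarith [sq_nonneg n.1, sq_nonneg n.2]
    have h2 : n.2 ^ 2 = 0 := by nlinarith [sq_nonneg n.1, sq_nonneg n.2]
    ext
    · simpa using h1
    · simpa using h2
  exact_mod_cast this

lemma one_le_lamG {n : ℤ × ℤ} (h : n ≠ 0) : 1 ≤ lamG n := by
  unfold lamG
  nlinarith [one_le_nsq h, four_pi_sq]

lemma one_le_lam (k : Freq) : 1 ≤ lam k := one_le_lamG k.2

lemma lam_pos (k : Freq) : 0 < lam k := lt_of_lt_of_le one_pos (one_le_lam k)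

lemma lamG_nonneg (n : ℤ × ℤ) : 0 ≤ lamG n := by unfold lamG; positivity

lemma lamG_neg (n : ℤ × ℤ) : lamG (-n) = lamG n := by simp [lamG]

lemma lamG_add (m n : ℤ × ℤ) : lamG (m + n) ≤ 2 * (lamG m + lamG n) := by
  unfold lamG
  simp only [Prod.fst_add, Prod.snd_add, Int.cast_add]
  have : (0:ℝ) ≤ 4 * Real.pi ^ 2 := by positivity
  have h : ((m.1:ℝ) + n.1) ^ 2 + ((m.2:ℝ) + n.2) ^ 2 ≤
    2 * (((m.1:ℝ) ^ 2 + (m.2:ℝ) ^ 2) + ((n.1:ℝ) ^ 2 + (n.2:ℝ) ^ 2)) := by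
    nlinarith [sq_nonneg ((m.1:ℝ) - n.1), sq_nonneg ((m.2:ℝ) - n.2)]
  calc _ ≤ _ := mul_le_mul_of_nonneg_left h this
    _ = _ := by ring

/-- Extended-valued modulus of the coefficients, on the whole lattice. -/
def ec (c : Coef) (n : ℤ × ℤ) : ℝ≥0∞ := open Classical in if h : n ≠ 0 then ‖c ⟨n, h⟩‖ₑ else 0

lemma ec_zero (c : Coef) : ec c 0 = 0 := by simp [ec]

lemma ec_of_ne (c : Coef) {n : ℤ × ℤ} (h : n ≠ 0) : ec c n = ‖c ⟨n, h⟩‖ₑ := by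
  simp [ec, h]

lemma ec_freq (c : Coef) (k : Freq) : ec c k.1 = ‖c k‖ₑ := ec_of_ne c k.2

/-- Weighted square norm in `ℝ≥0∞`. -/
def eW (W : Freq → ℝ) (c : Coef) : ℝ≥0∞ := ∑' k, ENNReal.ofReal (W k * ‖c k‖ ^ 2)

/-- Squared Sobolev norm in `ℝ≥0∞`. -/
def eSq (α : ℝ) (c : Coef) : ℝ≥0∞ := eW (fun k => lam k ^ α) c

lemma hSq_eq (α : ℝ) (c : Coef) : hSq α c = (eSq α c).toReal := by
  unfold hSq eSq eW
  rw [ENNReal.tsum_toReal_eq (fun _ => ENNReal.ofReal_ne_top)]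
  congr 1; ext k
  rw [ENNReal.toReal_ofReal]
  have := lam_pos k
  positivity

lemma finH_iff (α : ℝ) (c : Coef) : FinH α c ↔ eSq α c ≠ ⊤ := by
  have hn : ∀ k, 0 ≤ lam k ^ α * ‖c k‖ ^ 2 := fun k => by
    have := lam_pos k
    positivity
  constructor
  · intro h
    exact h.tsum_ofReal_ne_top
  · intro h
    have := ENNReal.summable_toReal h
    refine this.congr ?_
    intro k
    rw [ENNReal.toReal_ofReal (hn k)]

lemma ofReal_hSq {α : ℝ} {c : Coef} (h : FinH α c) : ENNReal.ofReal (hSq α c) = eSq α c := by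
  rw [hSq_eq, ENNReal.ofReal_toReal ((finH_iff α c).1 h)]

lemma eW_mono {W W' : Freq → ℝ} (h : ∀ k, W k ≤ W' k) (c : Coef) : eW W c ≤ eW W' c :=
  ENNReal.tsum_le_tsum fun k => ENNReal.ofReal_le_ofReal
    (mul_le_mul_of_nonneg_right (h k) (by positivity))

lemma eSq_mono {α β : ℝ} (h : α ≤ β) (c : Coef) : eSq α c ≤ eSq β c :=
  eW_mono (fun k => Real.rpow_le_rpow_of_exponent_le (one_le_lam k) h) c

lemma eW_const_mul {W : Freq → ℝ} {C : ℝ} (hC : 0 ≤ C) (c : Coef) :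
    eW (fun k => C * W k) c = ENNReal.ofReal C * eW W c := by
  unfold eW
  rw [← ENNReal.tsum_mul_left]
  congr 1; ext k
  rw [← ENNReal.ofReal_mul hC, mul_assoc]

lemma eW_sub_le {W : Freq → ℝ} (hW : ∀ k, 0 ≤ W k) (c d : Coef) :
    eW W (c - d) ≤ 2 * eW W c + 2 * eW W d := by
  unfold eW
  rw [← ENNReal.tsum_mul_left, ← ENNReal.tsum_mul_left, ← ENNReal.tsum_add]
  refine ENNReal.tsum_le_tsum fun k => ?_
  have e2 : (2:ℝ≥0∞) = ENNReal.ofReal 2 := by simp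
  have := hW k
  rw [e2, ← ENNReal.ofReal_mul (by norm_num), ← ENNReal.ofReal_mul (by norm_num),
    ← ENNReal.ofReal_add (by positivity) (by positivity)]
  apply ENNReal.ofReal_le_ofReal
  have h1 : ‖(c - d) k‖ ≤ ‖c k‖ + ‖d k‖ := norm_sub_le _ _
  have h2 : ‖(c - d) k‖ ^ 2 ≤ 2 * ‖c k‖ ^ 2 + 2 * ‖d k‖ ^ 2 := by
    nlinarith [norm_nonneg ((c - d) k), sq_nonneg (‖c k‖ - ‖d k‖)]
  nlinarith

lemma tsum_freq_le (g : ℤ × ℤ → ℝ≥0∞) : ∑' k : Freq, g k.1 ≤ ∑' n, g n :=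
  ENNReal.tsum_comp_le_tsum_of_injective Subtype.val_injective g

lemma tsum_freq_eq {M : Type*} [AddCommMonoid M] [TopologicalSpace M]
    (g : ℤ × ℤ → M) (h : g 0 = 0) :
    ∑' k : Freq, g k.1 = ∑' n, g n := by
  apply Function.Injective.tsum_eq (g := fun k : Freq => k.1) Subtype.val_injective
  intro n hn
  refine ⟨⟨n, ?_⟩, rfl⟩
  rintro rfl
  exact hn h

/-- Weighted coefficient sequence. -/
def wt (v : ℤ × ℤ → ℝ) (c : Coef) (n : ℤ × ℤ) : ℝ≥0∞ := ENNReal.ofReal (v n) * ec c n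

lemma wt_one (c : Coef) : wt (fun _ => 1) c = ec c := by
  ext n; simp [wt]

lemma ofReal_sq_enorm (x : ℝ) (hx : 0 ≤ x) (z : ℂ) :
    (ENNReal.ofReal x * ‖z‖ₑ) ^ 2 = ENNReal.ofReal (x ^ 2 * ‖z‖ ^ 2) := by
  rw [mul_pow, ← ofReal_norm, ENNReal.ofReal_mul (by positivity),
    ENNReal.ofReal_pow hx, ENNReal.ofReal_pow (norm_nonneg _)]

lemma wt_sq (v : ℤ × ℤ → ℝ) (hv : ∀ n, 0 ≤ v n) (c : Coef) :
    ∑' n, wt v c n ^ 2 = eW (fun k => v k.1 ^ 2) c := by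
  rw [← tsum_freq_eq _ (by simp [wt, ec_zero])]
  unfold eW
  congr 1; ext k
  rw [wt, ec_freq, ofReal_sq_enorm _ (hv _)]

lemma wt_sq_rpow (p : ℝ) (c : Coef) :
    ∑' n, wt (fun n => lamG n ^ p) c n ^ 2 = eSq (2 * p) c := by
  rw [wt_sq _ (fun n => Real.rpow_nonneg (lamG_nonneg n) p)]
  unfold eSq
  congr 1; ext k
  rw [← lam_eq, ← Real.rpow_natCast, ← Real.rpow_mul (lam_pos k).le]
  push_cast; ring_nf

/-- `Σ λ⁻²`. -/
def S4 : ℝ≥0∞ := ∑' n : ℤ × ℤ, ENNReal.ofReal (lamG n)⁻¹ ^ 2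

lemma S4_ne_top : S4 ≠ ⊤ := by
  have hs : Summable (fun a : ℤ => (1 + (a:ℝ) ^ 2)⁻¹) := by
    have h1 : Summable (fun a : ℤ => 1 / (a:ℝ) ^ 2) := Real.summable_one_div_int_pow.2 (by norm_num)
    refine Summable.of_norm_bounded_eventually h1 ?_
    have : ({0}ᶜ : Set ℤ) ∈ Filter.cofinite := (Set.finite_singleton 0).compl_mem_cofinite
    filter_upwards [this] with a ha
    have ha' : (a:ℝ) ≠ 0 := by simpa using ha
    rw [Real.norm_of_nonneg (by positivity), one_div]
    apply inv_anti₀ (by positivity)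
    linarith
  have hp : Summable (fun n : ℤ × ℤ => 4 * ((1 + (n.1:ℝ) ^ 2)⁻¹ * (1 + (n.2:ℝ) ^ 2)⁻¹)) :=
    (hs.mul_of_nonneg hs (fun _ => by positivity) (fun _ => by positivity)).mul_left 4
  have := hp.tsum_ofReal_ne_top
  refine ne_top_of_le_ne_top this (ENNReal.tsum_le_tsum fun n => ?_)
  rw [← ENNReal.ofReal_pow (inv_nonneg.2 (lamG_nonneg n))]
  apply ENNReal.ofReal_le_ofReal
  by_cases h : n = 0
  · subst h; simp [lamG]
  have h1 := one_le_nsq h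
  have h2 : (n.1:ℝ) ^ 2 + (n.2:ℝ) ^ 2 ≤ lamG n := by
    unfold lamG; nlinarith [four_pi_sq]
  have h3 := one_le_lamG h
  have e4 : (4:ℝ) = (1/4)⁻¹ := by norm_num
  rw [← mul_inv, inv_pow, e4, ← mul_inv]
  apply inv_anti₀ (by positivity)
  nlinarith [sq_nonneg (n.1:ℝ), sq_nonneg (n.2:ℝ), mul_nonneg (sq_nonneg (n.1:ℝ)) (sq_nonneg (n.2:ℝ))]

lemma l1_le (v : ℤ × ℤ → ℝ) (c : Coef) :
    (∑' n, wt v c n) ^ 2 ≤ S4 * ∑' n, wt (fun n => lamG n * v n) c n ^ 2 := by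
  refine le_trans (le_of_eq ?_) (cs _ _)
  congr 2; ext n
  by_cases h : n = 0
  · subst h; simp [wt, ec_zero]
  have := one_le_lamG h
  rw [wt, wt, ← mul_assoc, ← ENNReal.ofReal_mul (by positivity), ← mul_assoc,
    inv_mul_cancel₀ (by positivity), one_mul]

lemma l1_le_rpow (p : ℝ) (c : Coef) :
    (∑' n, wt (fun n => lamG n ^ p) c n) ^ 2 ≤ S4 * eSq (2 * p + 2) c := by
  refine (l1_le _ c).trans (le_of_eq ?_)
  have : eSq (2 * p + 2) c = eSq (2 * (p + 1)) c := by ring_nf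
  rw [this, ← wt_sq_rpow]
  congr 2; ext n
  by_cases h : n = 0
  · subst h; simp [wt, ec_zero]
  have := one_le_lamG h
  rw [wt, wt, Real.rpow_add (by positivity), Real.rpow_one, mul_comm (lamG n)]

lemma l1_ec (c : Coef) : (∑' n, ec c n) ^ 2 ≤ S4 * eSq 2 c := by
  have := l1_le_rpow 0 c
  simpa [wt_one] using this

/-- The summand of `Bc`. -/
def bt (c d : Coef) (k m : Freq) : ℂ :=
  if h : k.1 - m.1 ≠ 0 then
    c m * d ⟨k.1 - m.1, h⟩ *
      (((dotR (evec m) (fvec ⟨k.1 - m.1, h⟩) *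
        dotR (evec ⟨k.1 - m.1, h⟩) (evec k) : ℝ)) : ℂ)
  else 0

lemma Bc_eq (c d : Coef) (k : Freq) :
    Bc c d k = (((2 * Real.pi : ℝ) : ℂ) * Complex.I) * ∑' m : Freq, bt c d k m := rfl

lemma knormSq_pos (k : Freq) : 0 < knormSq k := lt_of_lt_of_le one_pos (one_le_nsq k.2)

lemma evec_sq (k : Freq) : (evec k).1 ^ 2 + (evec k).2 ^ 2 = 1 := by
  have h := knormSq_pos k
  unfold evec
  simp only [div_pow, Real.sq_sqrt h.le]
  rw [← add_div, div_eq_one_iff_eq h.ne']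
  unfold knormSq; ring

lemma evec_orth (k : Freq) : (evec k).1 * (k.1.1:ℝ) + (evec k).2 * (k.1.2:ℝ) = 0 := by
  unfold evec
  simp only
  ring

lemma dotR_le (a b : ℝ × ℝ) : |dotR a b| ≤ √(a.1 ^ 2 + a.2 ^ 2) * √(b.1 ^ 2 + b.2 ^ 2) := by
  rw [← Real.sqrt_mul (by positivity)]
  apply Real.abs_le_sqrt
  unfold dotR
  nlinarith [sq_nonneg (a.1 * b.2 - a.2 * b.1)]

lemma symb_le1 (k m n : Freq) :
    |dotR (evec m) (fvec n) * dotR (evec n) (evec k)| ≤ √(knormSq n) := by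
  rw [abs_mul]
  have h1 := dotR_le (evec m) (fvec n)
  have h2 := dotR_le (evec n) (evec k)
  rw [evec_sq, Real.sqrt_one] at h1
  rw [evec_sq, evec_sq, Real.sqrt_one, one_mul] at h2
  have h3 : √((fvec n).1 ^ 2 + (fvec n).2 ^ 2) = √(knormSq n) := rfl
  rw [h3, one_mul] at h1
  nlinarith [abs_nonneg (dotR (evec m) (fvec n)), abs_nonneg (dotR (evec n) (evec k))]

lemma symb_le2 (k m n : Freq) (h : n.1 = k.1 - m.1) :
    |dotR (evec m) (fvec n) * dotR (evec n) (evec k)| ≤ √(knormSq k) := by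
  have e : dotR (evec m) (fvec n) = dotR (evec m) (fvec k) := by
    have := evec_orth m
    unfold dotR fvec
    simp only [h, Prod.fst_sub, Prod.snd_sub, Int.cast_sub]
    linarith
  rw [abs_mul, e]
  have h1 := dotR_le (evec m) (fvec k)
  have h2 := dotR_le (evec n) (evec k)
  rw [evec_sq, Real.sqrt_one] at h1
  rw [evec_sq, evec_sq, Real.sqrt_one, one_mul] at h2
  have h3 : √((fvec k).1 ^ 2 + (fvec k).2 ^ 2) = √(knormSq k) := rfl
  rw [h3, one_mul] at h1
  nlinarith [abs_nonneg (dotR (evec m) (fvec k)), abs_nonneg (dotR (evec n) (evec k))]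

lemma sqrt_lam (k : Freq) : √(lam k) = 2 * Real.pi * √(knormSq k) := by
  unfold lam
  have : 4 * Real.pi ^ 2 * knormSq k = (2 * Real.pi) ^ 2 * knormSq k := by ring
  rw [this, Real.sqrt_mul (by positivity), Real.sqrt_sq (by positivity)]

lemma enorm_ofReal_le {x y : ℝ} (h : |x| ≤ y) : ‖((x:ℝ):ℂ)‖ₑ ≤ ENNReal.ofReal y := by
  rw [← ofReal_norm]
  apply ENNReal.ofReal_le_ofReal
  simpa using h

lemma enorm_twopi : ‖(((2 * Real.pi : ℝ) : ℂ) * Complex.I)‖ₑ = ENNReal.ofReal (2 * Real.pi) := by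
  rw [← ofReal_norm]
  congr 1
  rw [norm_mul, Complex.norm_I, mul_one, Complex.norm_real, Real.norm_of_nonneg (by positivity)]

lemma bt_le1 (c d : Coef) (k m : Freq) :
    ENNReal.ofReal (2 * Real.pi) * ‖bt c d k m‖ₑ ≤ ec c m.1 * wt (fun n => √(lamG n)) d (k.1 - m.1) := by
  unfold bt
  split_ifs with h
  · rw [enorm_mul, enorm_mul, ec_freq, wt, ec_of_ne d h]
    have := enorm_ofReal_le (symb_le1 k m ⟨k.1 - m.1, h⟩)
    have e : ENNReal.ofReal √(lamG (k.1 - m.1)) = ENNReal.ofReal (2 * Real.pi) *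
        ENNReal.ofReal √(knormSq ⟨k.1 - m.1, h⟩) := by
      rw [← ENNReal.ofReal_mul (by positivity)]
      exact congrArg ENNReal.ofReal (sqrt_lam ⟨k.1 - m.1, h⟩)
    rw [e]
    calc _ ≤ ENNReal.ofReal (2 * Real.pi) * (‖c m‖ₑ * ‖d ⟨k.1 - m.1, h⟩‖ₑ *
          ENNReal.ofReal √(knormSq ⟨k.1 - m.1, h⟩)) := by gcongr
      _ = _ := by ring
  · simp

lemma bt_le2 (c d : Coef) (k m : Freq) :
    ‖bt c d k m‖ₑ ≤ ENNReal.ofReal √(knormSq k) * (ec c m.1 * ec d (k.1 - m.1)) := by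
  unfold bt
  split_ifs with h
  · rw [enorm_mul, enorm_mul, ec_freq, ec_of_ne d h]
    have := enorm_ofReal_le (symb_le2 k m ⟨k.1 - m.1, h⟩ rfl)
    rw [mul_comm]
    gcongr
  · simp

lemma Bc_le1 (c d : Coef) (k : Freq) :
    ‖Bc c d k‖ₑ ≤ conv (ec c) (wt (fun n => √(lamG n)) d) k.1 := by
  rw [Bc_eq, enorm_mul, enorm_twopi]
  calc _ ≤ ENNReal.ofReal (2 * Real.pi) * ∑' m, ‖bt c d k m‖ₑ := by
        gcongr; exact enorm_tsum_le_tsum_enorm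
    _ = ∑' m, ENNReal.ofReal (2 * Real.pi) * ‖bt c d k m‖ₑ := by rw [ENNReal.tsum_mul_left]
    _ ≤ ∑' m : Freq, ec c m.1 * wt (fun n => √(lamG n)) d (k.1 - m.1) :=
        ENNReal.tsum_le_tsum fun m => bt_le1 c d k m
    _ ≤ _ := tsum_freq_le (fun m => ec c m * wt (fun n => √(lamG n)) d (k.1 - m))

lemma Bc_le_aux (g : Freq → ℂ) (Z : ℤ × ℤ → ℝ≥0∞) (k : Freq)
    (h : ∀ m : Freq, ‖g m‖ₑ ≤ ENNReal.ofReal √(knormSq k) * Z m.1) :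
    ‖(((2 * Real.pi : ℝ) : ℂ) * Complex.I) * ∑' m : Freq, g m‖ₑ ≤
      ENNReal.ofReal √(lam k) * ∑' m, Z m := by
  rw [enorm_mul, enorm_twopi, sqrt_lam,
    ENNReal.ofReal_mul (p := 2 * Real.pi) (q := √(knormSq k)) (by positivity), mul_assoc]
  refine mul_le_mul' le_rfl ?_
  calc _ ≤ ∑' m, ‖g m‖ₑ := enorm_tsum_le_tsum_enorm
    _ ≤ ∑' m : Freq, ENNReal.ofReal √(knormSq k) * Z m.1 := ENNReal.tsum_le_tsum h
    _ ≤ _ := by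
      rw [ENNReal.tsum_mul_left]
      exact mul_le_mul' le_rfl (tsum_freq_le Z)

lemma Bc_le2 (c d : Coef) (k : Freq) :
    ‖Bc c d k‖ₑ ≤ ENNReal.ofReal √(lam k) * conv (ec c) (ec d) k.1 := by
  rw [Bc_eq]
  exact Bc_le_aux _ (fun m => ec c m * ec d (k.1 - m)) k (fun m => bt_le2 c d k m)

lemma ec_sq_eq (c : Coef) : ∑' n, ec c n ^ 2 = eSq 0 c := by
  have := wt_sq_rpow 0 c
  simpa [wt_one] using this

lemma bt_summable {c d : Coef} (hc : eSq 0 c ≠ ⊤) (hd : eSq 0 d ≠ ⊤) (k : Freq) :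
    Summable (bt c d k) := by
  have : ∑' m, ‖bt c d k m‖ₑ ≠ ⊤ := by
    have h1 : ∑' m, ‖bt c d k m‖ₑ ≤ ENNReal.ofReal √(knormSq k) * conv (ec c) (ec d) k.1 :=
      calc _ ≤ ∑' m : Freq, ENNReal.ofReal √(knormSq k) * (ec c m.1 * ec d (k.1 - m.1)) :=
            ENNReal.tsum_le_tsum fun m => bt_le2 c d k m
        _ ≤ _ := by
          rw [ENNReal.tsum_mul_left]; gcongr
          exact tsum_freq_le (fun m => ec c m * ec d (k.1 - m))
    refine ne_top_of_le_ne_top ?_ h1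
    apply ENNReal.mul_ne_top ENNReal.ofReal_ne_top
    have h2 := conv_sq_le (ec c) (ec d) k.1
    rw [ec_sq_eq, ec_sq_eq] at h2
    intro h3
    rw [h3] at h2
    have : eSq 0 c * eSq 0 d ≠ ⊤ := ENNReal.mul_ne_top hc hd
    simp at h2
    exact this h2
  have h2 := ENNReal.summable_toReal this
  apply Summable.of_norm
  simpa using h2

lemma bt_sub (c d c' d' : Coef) (k m : Freq) :
    bt c d k m - bt c' d' k m = bt c (d - d') k m + bt (c - c') d' k m := by
  unfold bt
  split_ifs with h
  · have e1 : (d - d') (⟨k.1 - m.1, h⟩ : Freq) = d ⟨k.1 - m.1, h⟩ - d' ⟨k.1 - m.1, h⟩ := rfl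
    have e2 : (c - c') m = c m - c' m := rfl
    rw [e2]
    refine Eq.symm ((congrArg (fun z => c m * z * (((dotR (evec m) (fvec ⟨k.1 - m.1, h⟩) *
      dotR (evec ⟨k.1 - m.1, h⟩) (evec k) : ℝ)) : ℂ) + _) e1).trans ?_)
    ring
  · simp

lemma Bc_sub_le {c d c' d' : Coef} (hc : eSq 0 c ≠ ⊤) (hd : eSq 0 d ≠ ⊤)
    (hc' : eSq 0 c' ≠ ⊤) (hd' : eSq 0 d' ≠ ⊤) (k : Freq) :
    ‖Bc c d k - Bc c' d' k‖ₑ ≤ ENNReal.ofReal √(lam k) *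
      (conv (ec c) (ec (d - d')) k.1 + conv (ec (c - c')) (ec d') k.1) := by
  rw [Bc_eq, Bc_eq, ← mul_sub, ← (bt_summable hc hd k).tsum_sub (bt_summable hc' hd' k)]
  unfold conv
  rw [← ENNReal.tsum_add]
  refine Bc_le_aux _ (fun m => ec c m * ec (d - d') (k.1 - m) + ec (c - c') m * ec d' (k.1 - m)) k ?_
  intro m
  rw [bt_sub, mul_add]
  exact (enorm_add_le _ _).trans (add_le_add (bt_le2 _ _ _ _) (bt_le2 _ _ _ _))

/-! ### Product estimates -/

lemma conv_wt_le {v : ℤ × ℤ → ℝ} {c d : Coef} {Z : ℤ × ℤ → ℝ≥0∞} (k : Freq)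
    (h : ∀ m n : Freq, k.1 = m.1 + n.1 →
      ENNReal.ofReal (v k.1) * (ec c m.1 * ec d n.1) ≤ Z m.1) :
    ENNReal.ofReal (v k.1) * conv (ec c) (ec d) k.1 ≤ ∑' m, Z m := by
  unfold conv
  rw [← ENNReal.tsum_mul_left]
  refine ENNReal.tsum_le_tsum fun m => ?_
  by_cases hm : m = 0
  · subst hm; simp [ec_zero]
  by_cases hn : k.1 - m = 0
  · simp [hn, ec_zero]
  exact h ⟨m, hm⟩ ⟨k.1 - m, hn⟩ (by simp)

lemma prod_reg {v : ℤ × ℤ → ℝ} (hv0 : ∀ n, 0 ≤ v n) {C : ℝ} (hC : 0 ≤ C)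
    (hv : ∀ m n, v (m + n) ≤ C * (v m + v n)) (c : Coef) :
    ∑' k : Freq, (ENNReal.ofReal (v k.1) * conv (ec c) (ec c) k.1) ^ 2 ≤
      ENNReal.ofReal C ^ 2 * (4 * S4) * eSq 2 c * eW (fun k => v k.1 ^ 2) c := by
  have h1 : ∀ k : Freq, ENNReal.ofReal (v k.1) * conv (ec c) (ec c) k.1 ≤
      ENNReal.ofReal C * (2 * conv (ec c) (wt v c) k.1) := by
    intro k
    have := conv_wt_le (v := v) (c := c) (d := c)
      (Z := fun m => ENNReal.ofReal C * (wt v c m * ec c (k.1 - m) + ec c m * wt v c (k.1 - m))) k ?_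
    · refine this.trans (le_of_eq ?_)
      rw [ENNReal.tsum_mul_left, ENNReal.tsum_add]
      congr 1
      change conv (wt v c) (ec c) k.1 + conv (ec c) (wt v c) k.1 = _
      rw [conv_comm (wt v c), two_mul]
    · intro m n hk
      have e : k.1 - m.1 = n.1 := by rw [hk]; simp
      simp only [e]
      have : ENNReal.ofReal (v k.1) ≤
          ENNReal.ofReal C * (ENNReal.ofReal (v m.1) + ENNReal.ofReal (v n.1)) := by
        rw [← ENNReal.ofReal_add (hv0 _) (hv0 _), ← ENNReal.ofReal_mul hC, hk]
        exact ENNReal.ofReal_le_ofReal (hv _ _)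
      calc _ ≤ ENNReal.ofReal C * (ENNReal.ofReal (v m.1) + ENNReal.ofReal (v n.1)) *
            (ec c m.1 * ec c n.1) := by gcongr
        _ = _ := by simp only [wt]; ring
  calc _ ≤ ∑' k : Freq, (ENNReal.ofReal C * (2 * conv (ec c) (wt v c) k.1)) ^ 2 :=
        ENNReal.tsum_le_tsum fun k => pow_le_pow_left' (h1 k) 2
    _ = ENNReal.ofReal C ^ 2 * 4 * ∑' k : Freq, conv (ec c) (wt v c) k.1 ^ 2 := by
        rw [← ENNReal.tsum_mul_left]
        congr 1; ext k; ring
    _ ≤ ENNReal.ofReal C ^ 2 * 4 * ((∑' m, ec c m) ^ 2 * ∑' m, wt v c m ^ 2) := by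
        gcongr
        exact (tsum_freq_le (fun k => conv (ec c) (wt v c) k ^ 2)).trans (young _ _)
    _ ≤ ENNReal.ofReal C ^ 2 * 4 * ((S4 * eSq 2 c) * eW (fun k => v k.1 ^ 2) c) := by
        rw [wt_sq v hv0]; gcongr; exact l1_ec c
    _ = _ := by ring

lemma lamG_tri {k m n : Freq} (h : k.1 = m.1 + n.1) : lam k ≤ 4 * max (lam m) (lam n) := by
  have := lamG_add m.1 n.1
  rw [← h] at this
  rw [lam_eq, lam_eq, lam_eq]
  have h1 := le_max_left (lamG m.1) (lamG n.1)
  have h2 := le_max_right (lamG m.1) (lamG n.1)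
  linarith

lemma lamG_tri' {k m n : Freq} (h : k.1 = m.1 + n.1) : lam n ≤ 4 * max (lam m) (lam k) := by
  have := lamG_add (-m.1) k.1
  rw [lamG_neg, show -m.1 + k.1 = n.1 by rw [h]; simp] at this
  rw [lam_eq, lam_eq, lam_eq]
  have h1 := le_max_left (lamG m.1) (lamG k.1)
  have h2 := le_max_right (lamG m.1) (lamG k.1)
  linarith

lemma peetre {k m n : Freq} (h : k.1 = m.1 + n.1) (p : ℝ) :
    lam k ^ p ≤ 4 ^ |p| * (lam m ^ |p| * lam n ^ p) := by
  have hk := one_le_lam k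
  have hm := one_le_lam m
  have hn := one_le_lam n
  rcases le_total 0 p with hp | hp
  · rw [abs_of_nonneg hp, ← Real.mul_rpow (by positivity) (by positivity),
      ← Real.mul_rpow (by positivity) (by positivity)]
    apply Real.rpow_le_rpow (by positivity) _ hp
    refine (lamG_tri h).trans ?_
    apply mul_le_mul_of_nonneg_left _ (by norm_num)
    apply max_le <;> nlinarith
  · rw [abs_of_nonpos hp]
    have h1 : lam n ≤ 4 * (lam m * lam k) := by
      refine (lamG_tri' h).trans ?_
      apply mul_le_mul_of_nonneg_left _ (by norm_num)
      apply max_le <;> nlinarith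
    have h2 : lam n ^ (-p) ≤ (4 * (lam m * lam k)) ^ (-p) :=
      Real.rpow_le_rpow (by positivity) h1 (by linarith)
    rw [Real.mul_rpow (by positivity) (by positivity),
      Real.mul_rpow (by positivity) (by positivity)] at h2
    have e1 : lam n ^ (-p) * lam n ^ p = 1 := by
      rw [← Real.rpow_add (by positivity)]; simp
    have e2 : lam k ^ (-p) * lam k ^ p = 1 := by
      rw [← Real.rpow_add (by positivity)]; simp
    have p1 : 0 < lam n ^ p := by positivity
    have p2 : 0 < lam k ^ p := by positivity
    calc lam k ^ p = (lam n ^ (-p) * lam n ^ p) * lam k ^ p := by rw [e1, one_mul]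
      _ ≤ (4 ^ (-p) * (lam m ^ (-p) * lam k ^ (-p)) * lam n ^ p) * lam k ^ p := by gcongr
      _ = 4 ^ (-p) * (lam m ^ (-p) * lam n ^ p) * (lam k ^ (-p) * lam k ^ p) := by ring
      _ = _ := by rw [e2, mul_one]

lemma peetre2 {k m n : Freq} (h : k.1 = m.1 + n.1) {p : ℝ} (hp1 : 1 ≤ |p|) :
    lam k ^ p ≤ 4 ^ |p| * (lam n ^ p + lam m ^ |p| * lam n ^ (p - 1) +
      (lam k)⁻¹ * (lam m ^ |p| * lam n ^ p)) := by
  have hk := one_le_lam k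
  have hm := one_le_lam m
  have hn := one_le_lam n
  have q1 : 0 ≤ lam n ^ p := by positivity
  have q2 : 0 ≤ lam m ^ |p| * lam n ^ (p - 1) := by positivity
  have q3 : 0 ≤ (lam k)⁻¹ * (lam m ^ |p| * lam n ^ p) := by positivity
  have q4 : (0:ℝ) ≤ 4 ^ |p| := by positivity
  rcases le_total 0 p with hp | hp
  · rw [abs_of_nonneg hp] at *
    rcases le_total (lam m) (lam n) with hmn | hmn
    · have h1 := lamG_tri h
      rw [max_eq_right hmn] at h1
      have := Real.rpow_le_rpow (by positivity) h1 hp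
      rw [Real.mul_rpow (by positivity) (by positivity)] at this
      refine this.trans (mul_le_mul_of_nonneg_left ?_ q4)
      linarith
    · have h1 := lamG_tri h
      rw [max_eq_left hmn] at h1
      have := Real.rpow_le_rpow (by positivity) h1 hp
      rw [Real.mul_rpow (by positivity) (by positivity)] at this
      refine this.trans (mul_le_mul_of_nonneg_left ?_ q4)
      have h2 : (1:ℝ) ≤ lam n ^ (p - 1) := Real.one_le_rpow hn (by linarith)
      have h3 : 0 ≤ lam m ^ p := by positivity
      nlinarith
  · rw [abs_of_nonpos hp] at *
    have e1 : lam n ^ (-p) * lam n ^ p = 1 := by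
      rw [← Real.rpow_add (by positivity)]; simp
    have e2 : lam k ^ (-p) * lam k ^ p = 1 := by
      rw [← Real.rpow_add (by positivity)]; simp
    rcases le_total (lam m) (lam k) with hmk | hmk
    · have h1 := lamG_tri' h
      rw [max_eq_right hmk] at h1
      have := Real.rpow_le_rpow (by positivity) h1 (show 0 ≤ -p by linarith)
      rw [Real.mul_rpow (by positivity) (by positivity)] at this
      calc lam k ^ p = (lam n ^ (-p) * lam n ^ p) * lam k ^ p := by rw [e1, one_mul]
        _ ≤ (4 ^ (-p) * lam k ^ (-p) * lam n ^ p) * lam k ^ p := by gcongr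
        _ = 4 ^ (-p) * lam n ^ p * (lam k ^ (-p) * lam k ^ p) := by ring
        _ = 4 ^ (-p) * lam n ^ p := by rw [e2, mul_one]
        _ ≤ _ := mul_le_mul_of_nonneg_left (by linarith) q4
    · have h1 := lamG_tri' h
      rw [max_eq_left hmk] at h1
      have := Real.rpow_le_rpow (by positivity) h1 (show 0 ≤ -p by linarith)
      rw [Real.mul_rpow (by positivity) (by positivity)] at this
      have h4 : lam k ^ p ≤ (lam k)⁻¹ := by
        rw [← Real.rpow_neg_one]
        exact Real.rpow_le_rpow_of_exponent_le hk (by linarith)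
      calc lam k ^ p ≤ (lam n ^ (-p) * lam n ^ p) * (lam k)⁻¹ := by rw [e1, one_mul]; exact h4
        _ ≤ (4 ^ (-p) * lam m ^ (-p) * lam n ^ p) * (lam k)⁻¹ := by gcongr
        _ = 4 ^ (-p) * ((lam k)⁻¹ * (lam m ^ (-p) * lam n ^ p)) := by ring
        _ ≤ _ := mul_le_mul_of_nonneg_left (by linarith) q4

lemma prod_small (p : ℝ) (c d : Coef) :
    ∑' k : Freq, (ENNReal.ofReal (lamG k.1 ^ p) * conv (ec c) (ec d) k.1) ^ 2 ≤
      ENNReal.ofReal (4 ^ |p|) ^ 2 * S4 * (eSq (2 * |p| + 2) c * eSq (2 * p) d) := by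
  have h1 : ∀ k : Freq, ENNReal.ofReal (lamG k.1 ^ p) * conv (ec c) (ec d) k.1 ≤
      ENNReal.ofReal (4 ^ |p|) *
        conv (wt (fun n => lamG n ^ |p|) c) (wt (fun n => lamG n ^ p) d) k.1 := by
    intro k
    refine (conv_wt_le (v := fun n => lamG n ^ p) (c := c) (d := d)
      (Z := fun m => ENNReal.ofReal (4 ^ |p|) * (wt (fun n => lamG n ^ |p|) c m *
        wt (fun n => lamG n ^ p) d (k.1 - m))) k ?_).trans (le_of_eq ?_)
    · intro m n hk
      have e : k.1 - m.1 = n.1 := by rw [hk]; simp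
      simp only [e, wt, ← lam_eq]
      have h2 := ENNReal.ofReal_le_ofReal (peetre hk p)
      have hm := lam_pos m
      have hn := lam_pos n
      rw [ENNReal.ofReal_mul (by positivity), ENNReal.ofReal_mul (by positivity)] at h2
      calc _ ≤ (ENNReal.ofReal (4 ^ |p|) * (ENNReal.ofReal (lam m ^ |p|) *
            ENNReal.ofReal (lam n ^ p))) * (ec c m.1 * ec d n.1) := mul_le_mul' h2 le_rfl
        _ = _ := by ring
    · rw [ENNReal.tsum_mul_left]; rfl
  calc _ ≤ ∑' k : Freq, (ENNReal.ofReal (4 ^ |p|) *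
        conv (wt (fun n => lamG n ^ |p|) c) (wt (fun n => lamG n ^ p) d) k.1) ^ 2 :=
        ENNReal.tsum_le_tsum fun k => pow_le_pow_left' (h1 k) 2
    _ = ENNReal.ofReal (4 ^ |p|) ^ 2 * ∑' k : Freq,
        conv (wt (fun n => lamG n ^ |p|) c) (wt (fun n => lamG n ^ p) d) k.1 ^ 2 := by
        rw [← ENNReal.tsum_mul_left]
        congr 1; ext k; ring
    _ ≤ ENNReal.ofReal (4 ^ |p|) ^ 2 * ((S4 * eSq (2 * |p| + 2) c) * eSq (2 * p) d) := by
        refine mul_le_mul' le_rfl ?_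
        refine (tsum_freq_le (fun k => conv (wt (fun n => lamG n ^ |p|) c)
          (wt (fun n => lamG n ^ p) d) k ^ 2)).trans ((young _ _).trans ?_)
        rw [wt_sq_rpow]
        exact mul_le_mul' (l1_le_rpow _ _) le_rfl
    _ = _ := by ring

lemma prod_large {p : ℝ} (hp : 1 ≤ |p|) (c d : Coef) :
    ∑' k : Freq, (ENNReal.ofReal (lamG k.1 ^ p) * conv (ec c) (ec d) k.1) ^ 2 ≤
      ENNReal.ofReal (4 ^ |p|) ^ 2 * (10 * S4) * (eSq (2 * |p|) c * eSq (2 * p) d) := by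
  set X1 := ec c with hX1
  set X := wt (fun n => lamG n ^ |p|) c with hX
  set Y := wt (fun n => lamG n ^ p) d with hY
  set Y1 := wt (fun n => lamG n ^ (p - 1)) d with hY1
  have h1 : ∀ k : Freq, ENNReal.ofReal (lamG k.1 ^ p) * conv (ec c) (ec d) k.1 ≤
      ENNReal.ofReal (4 ^ |p|) * (conv X1 Y k.1 + conv Y1 X k.1 +
        ENNReal.ofReal (lamG k.1)⁻¹ * conv X Y k.1) := by
    intro k
    refine (conv_wt_le (v := fun n => lamG n ^ p) (c := c) (d := d)
      (Z := fun m => ENNReal.ofReal (4 ^ |p|) * (X1 m * Y (k.1 - m) + X m * Y1 (k.1 - m) +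
        ENNReal.ofReal (lamG k.1)⁻¹ * (X m * Y (k.1 - m)))) k ?_).trans (le_of_eq ?_)
    · intro m n hk
      have e : k.1 - m.1 = n.1 := by rw [hk]; simp
      simp only [hX1, hX, hY, hY1, e, wt, ← lam_eq]
      have h2 := ENNReal.ofReal_le_ofReal (peetre2 hk hp)
      have hm := lam_pos m
      have hn := lam_pos n
      have hk := lam_pos k
      rw [ENNReal.ofReal_mul (by positivity), ENNReal.ofReal_add (by positivity) (by positivity),
        ENNReal.ofReal_add (by positivity) (by positivity),
        ENNReal.ofReal_mul (p := lam m ^ |p|) (by positivity),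
        ENNReal.ofReal_mul (p := (lam k)⁻¹) (by positivity),
        ENNReal.ofReal_mul (p := lam m ^ |p|) (by positivity)] at h2
      refine (mul_le_mul' h2 le_rfl).trans (le_of_eq ?_)
      ring
    · rw [ENNReal.tsum_mul_left, ENNReal.tsum_add, ENNReal.tsum_add, ENNReal.tsum_mul_left,
        conv_comm Y1 X]; rfl
  have hT1 : ∑' k : Freq, conv X1 Y k.1 ^ 2 ≤ S4 * (eSq (2 * |p|) c * eSq (2 * p) d) := by
    refine (tsum_freq_le (fun k => conv X1 Y k ^ 2)).trans ((young _ _).trans ?_)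
    rw [hY, wt_sq_rpow, ← mul_assoc]
    refine mul_le_mul' ((l1_ec c).trans ?_) le_rfl
    exact mul_le_mul' le_rfl (eSq_mono (by linarith) c)
  have hT2 : ∑' k : Freq, conv Y1 X k.1 ^ 2 ≤ S4 * (eSq (2 * |p|) c * eSq (2 * p) d) := by
    refine (tsum_freq_le (fun k => conv Y1 X k ^ 2)).trans ((young _ _).trans ?_)
    rw [hX, wt_sq_rpow, mul_comm (eSq _ c), ← mul_assoc]
    refine mul_le_mul' ((l1_le_rpow _ _).trans (le_of_eq ?_)) le_rfl
    ring_nf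
  have hT3 : ∑' k : Freq, (ENNReal.ofReal (lamG k.1)⁻¹ * conv X Y k.1) ^ 2 ≤
      S4 * (eSq (2 * |p|) c * eSq (2 * p) d) := by
    calc _ ≤ ∑' k : Freq, ENNReal.ofReal (lamG k.1)⁻¹ ^ 2 * (eSq (2 * |p|) c * eSq (2 * p) d) := by
          refine ENNReal.tsum_le_tsum fun k => ?_
          rw [mul_pow]
          refine mul_le_mul' le_rfl ((conv_sq_le _ _ _).trans (le_of_eq ?_))
          rw [hX, hY, wt_sq_rpow, wt_sq_rpow]
      _ ≤ _ := by
          rw [ENNReal.tsum_mul_right]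
          exact mul_le_mul' (tsum_freq_le (fun n => ENNReal.ofReal (lamG n)⁻¹ ^ 2)) le_rfl
  have h2 : ∀ k : Freq, (ENNReal.ofReal (lamG k.1 ^ p) * conv (ec c) (ec d) k.1) ^ 2 ≤
      ENNReal.ofReal (4 ^ |p|) ^ 2 * (4 * conv X1 Y k.1 ^ 2 + 4 * conv Y1 X k.1 ^ 2 +
        2 * (ENNReal.ofReal (lamG k.1)⁻¹ * conv X Y k.1) ^ 2) := by
    intro k
    refine (pow_le_pow_left' (h1 k) 2).trans ?_
    rw [mul_pow]
    refine mul_le_mul' le_rfl ((add_sq_le _ _).trans ?_)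
    refine add_le_add ?_ le_rfl
    refine (mul_le_mul' le_rfl (add_sq_le _ _)).trans (le_of_eq ?_)
    ring
  refine (ENNReal.tsum_le_tsum h2).trans ?_
  rw [ENNReal.tsum_mul_left, ENNReal.tsum_add, ENNReal.tsum_add, ENNReal.tsum_mul_left,
    ENNReal.tsum_mul_left, ENNReal.tsum_mul_left, mul_assoc]
  refine mul_le_mul' le_rfl ?_
  calc _ ≤ 4 * (S4 * (eSq (2 * |p|) c * eSq (2 * p) d)) +
        4 * (S4 * (eSq (2 * |p|) c * eSq (2 * p) d)) +
        2 * (S4 * (eSq (2 * |p|) c * eSq (2 * p) d)) := by gcongr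
    _ = _ := by ring

lemma prod_diff (a : ℤ) : ∃ C : ℝ≥0∞, C ≠ ⊤ ∧ ∀ c d : Coef,
    ∑' k : Freq, (ENNReal.ofReal (lamG k.1 ^ ((a:ℝ) / 2)) * conv (ec c) (ec d) k.1) ^ 2 ≤
      C * (eSq ((astar a : ℝ) + 1) c * eSq a d) := by
  have habs : |(a:ℝ)/2| = |(a:ℝ)| / 2 := by rw [abs_div]; norm_num
  have e1 : 2 * ((a:ℝ)/2) = a := by ring
  by_cases ha : |a| ≤ 1
  · refine ⟨ENNReal.ofReal (4 ^ |(a:ℝ)/2|) ^ 2 * S4, ?_,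
      fun c d => (prod_small ((a:ℝ)/2) c d).trans (le_of_eq ?_)⟩
    · exact ENNReal.mul_ne_top (by simp) S4_ne_top
    · rw [e1, habs]
      unfold astar
      rw [if_pos ha]
      push_cast
      ring_nf
  · have ha' : 2 ≤ |a| := by omega
    have ha2 : (2:ℝ) ≤ |(a:ℝ)| := by exact_mod_cast ha'
    refine ⟨ENNReal.ofReal (4 ^ |(a:ℝ)/2|) ^ 2 * (10 * S4), ?_,
      fun c d => (prod_large (p := (a:ℝ)/2) ?_ c d).trans ?_⟩
    · exact ENNReal.mul_ne_top (by simp) (ENNReal.mul_ne_top (by simp) S4_ne_top)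
    · rw [habs]; linarith
    · rw [e1]
      refine mul_le_mul' le_rfl (mul_le_mul' (eSq_mono ?_ c) le_rfl)
      unfold astar
      rw [if_neg ha, habs]
      push_cast
      linarith

lemma eW_le_of_finset {W : Freq → ℝ} (hW : ∀ k, 0 ≤ W k) {c : Coef} {X : ℝ}
    (h : ∀ F : Finset Freq, ∑ k ∈ F, W k * ‖c k‖ ^ 2 ≤ X) : eW W c ≤ ENNReal.ofReal X := by
  unfold eW
  rw [ENNReal.tsum_eq_iSup_sum]
  refine iSup_le fun F => ?_
  rw [← ENNReal.ofReal_sum_of_nonneg (fun k _ => mul_nonneg (hW k) (by positivity))]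
  exact ENNReal.ofReal_le_ofReal (h F)

lemma finset_le_of_eW {W : Freq → ℝ} (hW : ∀ k, 0 ≤ W k) {c : Coef} (hc : eW W c ≠ ⊤)
    (F : Finset Freq) : ∑ k ∈ F, W k * ‖c k‖ ^ 2 ≤ (eW W c).toReal := by
  have h1 : ENNReal.ofReal (∑ k ∈ F, W k * ‖c k‖ ^ 2) ≤ eW W c := by
    rw [ENNReal.ofReal_sum_of_nonneg (fun k _ => mul_nonneg (hW k) (by positivity))]
    exact ENNReal.sum_le_tsum F
  exact (ENNReal.ofReal_le_iff_le_toReal hc).1 h1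

lemma aem_coef {T : ℝ} {c : ℝ → Coef}
    (hcont : ∀ k, ContinuousOn (fun s => c s k) (Icc 0 T)) (k : Freq) :
    AEMeasurable (fun s => c s k) (volume.restrict (Ioc 0 T)) :=
  ((hcont k).mono Ioc_subset_Icc_self).aemeasurable measurableSet_Ioc

lemma aem_eW {T : ℝ} {c : ℝ → Coef}
    (hcont : ∀ k, ContinuousOn (fun s => c s k) (Icc 0 T)) (W : Freq → ℝ) :
    AEMeasurable (fun s => eW W (c s)) (volume.restrict (Ioc 0 T)) := by
  unfold eW
  refine AEMeasurable.tsum fun k => ?_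
  exact (((aem_coef hcont k).norm.pow_const 2).const_mul (W k)).ennreal_ofReal

lemma lint_le {T : ℝ} (hT : 0 ≤ T) {c : ℝ → Coef}
    (hcont : ∀ k, ContinuousOn (fun s => c s k) (Icc 0 T)) {W : Freq → ℝ} (hW : ∀ k, 0 ≤ W k)
    {X : ℝ} (h : ∀ F : Finset Freq, (∫ t in (0:ℝ)..T, ∑ k ∈ F, W k * ‖c t k‖ ^ 2) ≤ X) :
    ∫⁻ t in Ioc 0 T, eW W (c t) ≤ ENNReal.ofReal X := by
  unfold eW
  rw [lintegral_tsum (fun k =>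
    (((aem_coef hcont k).norm.pow_const 2).const_mul (W k)).ennreal_ofReal),
    ENNReal.tsum_eq_iSup_sum]
  refine iSup_le fun F => ?_
  refine le_trans ?_ (ENNReal.ofReal_le_ofReal (h F))
  have hi : ∀ k, ContinuousOn (fun t => W k * ‖c t k‖ ^ 2) (Icc 0 T) := fun k =>
    ((hcont k).norm.pow 2).const_mul (W k)
  rw [intervalIntegral.integral_finsetSum (fun k _ => by
    apply ContinuousOn.intervalIntegrable
    rw [uIcc_of_le hT]; exact hi k), ENNReal.ofReal_sum_of_nonneg]
  · refine Finset.sum_le_sum fun k _ => ?_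
    rw [intervalIntegral.integral_of_le hT, ofReal_integral_eq_lintegral_ofReal]
    · exact ((hi k).integrableOn_Icc).mono_set Ioc_subset_Icc_self
    · exact Filter.Eventually.of_forall fun t => mul_nonneg (hW k) (by positivity)
  · intro k _
    exact intervalIntegral.integral_nonneg hT fun t _ => mul_nonneg (hW k) (by positivity)

lemma norm_sq_deriv {c : ℝ → ℂ} {g : ℂ} {r t : ℝ}
    (h : HasDerivAt c (g - ((r : ℝ) : ℂ) * c t) t) :
    HasDerivAt (fun s => ‖c s‖ ^ 2) (2 * (inner ℝ (c t) g - r * ‖c t‖ ^ 2)) t := by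
  have := h.norm_sq
  convert this using 2
  rw [inner_sub_right]
  congr 1
  rw [← Complex.real_smul, inner_smul_right, real_inner_self_eq_norm_sq]

lemma ftc {T ν : ℝ} {c g : ℝ → Coef}
    (hcont : ∀ k, ContinuousOn (fun s => c s k) (Icc 0 T))
    (hder : ∀ k, ∀ t ∈ Ioc (0:ℝ) T,
      HasDerivAt (fun s => c s k) (g t k - ((ν * lam k : ℝ) : ℂ) * c t k) t)
    (hgb : ∀ k, ∃ X : ℝ, ∀ t ∈ Ioc (0:ℝ) T, ‖g t k‖ ≤ X) (hT : 0 ≤ T) (k : Freq) :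
    IntervalIntegrable (fun s => (inner ℝ (c s k) (g s k) : ℝ)) volume 0 T ∧
    ∀ t ∈ Icc (0:ℝ) T, ‖c t k‖ ^ 2 - ‖c 0 k‖ ^ 2 =
      ∫ s in (0:ℝ)..t, 2 * (inner ℝ (c s k) (g s k) - ν * lam k * ‖c s k‖ ^ 2) := by
  obtain ⟨X, hX⟩ := hgb k
  have hgm : AEMeasurable (fun s => g s k) (volume.restrict (Ioc 0 T)) := by
    have h1 : AEMeasurable (fun s => deriv (fun s => c s k) s + ((ν * lam k : ℝ) : ℂ) * c s k)
        (volume.restrict (Ioc 0 T)) :=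
      (measurable_deriv _).aemeasurable.add ((aem_coef hcont k).const_mul _)
    refine h1.congr ?_
    rw [Filter.EventuallyEq, ae_restrict_iff' measurableSet_Ioc]
    refine Filter.Eventually.of_forall fun t ht => ?_
    simp only [(hder k t ht).deriv]
    ring
  have hi : IntervalIntegrable (fun s => (inner ℝ (c s k) (g s k) : ℝ)) volume 0 T := by
    rw [intervalIntegrable_iff_integrableOn_Ioc_of_le hT]
    obtain ⟨Y, hY⟩ := isCompact_Icc.exists_bound_of_continuousOn (hcont k)
    refine Integrable.of_bound ?_ (Y * X) ?_
    · exact (AEMeasurable.inner (𝕜 := ℝ) (aem_coef hcont k) hgm).aestronglyMeasurable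
    · rw [ae_restrict_iff' measurableSet_Ioc]
      refine Filter.Eventually.of_forall fun t ht => ?_
      refine (norm_inner_le_norm _ _).trans ?_
      have hy := hY t (Ioc_subset_Icc_self ht)
      exact mul_le_mul hy (hX t ht) (norm_nonneg _) ((norm_nonneg _).trans hy)
  refine ⟨hi, fun t ht => ?_⟩
  have hsub : uIcc 0 t ⊆ uIcc 0 T := by
    rw [uIcc_of_le hT, uIcc_of_le ht.1]
    exact Icc_subset_Icc le_rfl ht.2
  have hcn : ContinuousOn (fun s => ‖c s k‖ ^ 2) (Icc 0 T) := (hcont k).norm.pow 2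
  have hci : IntervalIntegrable (fun s => ν * lam k * ‖c s k‖ ^ 2) volume 0 T := by
    apply ContinuousOn.intervalIntegrable
    rw [uIcc_of_le hT]
    exact hcn.const_mul _
  have := intervalIntegral.integral_eq_sub_of_hasDerivAt_of_le (f := fun s => ‖c s k‖ ^ 2)
    (f' := fun s => 2 * (inner ℝ (c s k) (g s k) - ν * lam k * ‖c s k‖ ^ 2)) ht.1
    (hcn.mono (Icc_subset_Icc le_rfl ht.2))
    (fun s hs => norm_sq_deriv (hder k s ⟨hs.1, hs.2.le.trans ht.2⟩))
    (((hi.sub hci).const_mul 2).mono_set hsub)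
  exact this.symm

lemma energy {T ν : ℝ} (hT : 0 < T) (hν : 0 < ν) {c g : ℝ → Coef} {W : Freq → ℝ}
    (hW : ∀ k, 0 ≤ W k)
    (hcont : ∀ k, ContinuousOn (fun s => c s k) (Icc 0 T))
    (hder : ∀ k, ∀ t ∈ Ioc (0:ℝ) T,
      HasDerivAt (fun s => c s k) (g t k - ((ν * lam k : ℝ) : ℂ) * c t k) t)
    {α : ℝ → ℝ} (hα : IntervalIntegrable α volume 0 T) (hα0 : ∀ t, 0 ≤ α t) {β : ℝ} (hβ : 0 ≤ β)
    (hgb : ∀ k, ∃ X : ℝ, ∀ t ∈ Ioc (0:ℝ) T, ‖g t k‖ ≤ X)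
    (hG : ∀ᵐ t ∂(volume.restrict (Ioc (0:ℝ) T)), eW (fun k => W k * (lam k)⁻¹) (g t) ≤
      ENNReal.ofReal (α t) * eW W (c t) + ENNReal.ofReal β)
    {M : ℝ} (hM : ∀ t ∈ Icc (0:ℝ) T, eW W (c t) ≤ ENNReal.ofReal M)
    {n : ℕ} (hn : (∫ t in (0:ℝ)..T, α t / ν) ≤ n / 2)
    {A : ℝ} (hA : (eW W (c 0)).toReal + β * T / ν ≤ A) :
    (∀ t ∈ Icc (0:ℝ) T, eW W (c t) ≤ ENNReal.ofReal (2 ^ n * A)) ∧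
      ∫⁻ t in Ioc 0 T, eW (fun k => W k * lam k) (c t) ≤ ENNReal.ofReal (2 ^ n * A / ν) := by
  set E : ℝ → ℝ := fun t => (eW W (c t)).toReal with hE
  have hE0 : ∀ t, 0 ≤ E t := fun t => ENNReal.toReal_nonneg
  have hfin : ∀ t ∈ Icc (0:ℝ) T, eW W (c t) ≠ ⊤ := fun t ht =>
    ne_top_of_le_ne_top ENNReal.ofReal_ne_top (hM t ht)
  have hEM : ∀ t ∈ Icc (0:ℝ) T, E t ≤ max M 0 := by
    intro t ht
    apply ENNReal.toReal_le_of_le_ofReal (le_max_right _ _)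
    exact (hM t ht).trans (ENNReal.ofReal_le_ofReal (le_max_left _ _))
  have hEm : AEStronglyMeasurable E (volume.restrict (Ioc 0 T)) :=
    (aem_eW hcont W).ennreal_toReal.aestronglyMeasurable
  have hαE : IntervalIntegrable (fun t => α t / ν * E t) volume 0 T := by
    rw [intervalIntegrable_iff_integrableOn_Ioc_of_le hT.le] at hα ⊢
    refine Integrable.mul_bdd (c := max M 0) (hα.div_const ν) hEm ?_
    rw [ae_restrict_iff' measurableSet_Ioc]
    refine Filter.Eventually.of_forall fun t ht => ?_
    rw [Real.norm_of_nonneg (hE0 t)]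
    exact hEM t (Ioc_subset_Icc_self ht)
  have hA0 : 0 ≤ A := by
    refine le_trans ?_ hA
    have := hE0 0
    positivity
  have hsub : ∀ t ∈ Icc (0:ℝ) T, uIcc 0 t ⊆ uIcc 0 T := by
    intro t ht
    rw [uIcc_of_le hT.le, uIcc_of_le ht.1]
    exact Icc_subset_Icc le_rfl ht.2
  -- the finite energy inequality
  have key : ∀ F : Finset Freq, ∀ t ∈ Icc (0:ℝ) T,
      (∑ k ∈ F, W k * ‖c t k‖ ^ 2) + ν * (∫ s in (0:ℝ)..t, ∑ k ∈ F, W k * lam k * ‖c s k‖ ^ 2)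
        ≤ A + ∫ s in (0:ℝ)..t, α s / ν * E s := by
    intro F t ht
    have hD : ContinuousOn (fun s => ∑ k ∈ F, W k * lam k * ‖c s k‖ ^ 2) (Icc 0 T) :=
      continuousOn_finsetSum _ fun k _ => ((hcont k).norm.pow 2).const_mul _
    have hDi : IntervalIntegrable (fun s => ∑ k ∈ F, W k * lam k * ‖c s k‖ ^ 2) volume 0 t := by
      apply ContinuousOn.intervalIntegrable
      rw [uIcc_of_le ht.1]
      exact hD.mono (Icc_subset_Icc le_rfl ht.2)
    have hαEt := hαE.mono_set (hsub t ht)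
    have hφ : IntervalIntegrable (fun s => -ν * (∑ k ∈ F, W k * lam k * ‖c s k‖ ^ 2) +
        (α s / ν * E s + β / ν)) volume 0 t :=
      (hDi.const_mul (-ν)).add (hαEt.add intervalIntegrable_const)
    have hIntg : ∀ k, IntervalIntegrable
        (fun s => W k * (2 * (inner ℝ (c s k) (g s k) - ν * lam k * ‖c s k‖ ^ 2))) volume 0 t := by
      intro k
      have h1 := (ftc hcont hder hgb hT.le k).1
      have hci : IntervalIntegrable (fun s => ν * lam k * ‖c s k‖ ^ 2) volume 0 T := by
        apply ContinuousOn.intervalIntegrable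
        rw [uIcc_of_le hT.le]
        exact ((hcont k).norm.pow 2).const_mul _
      exact (((h1.sub hci).const_mul 2).const_mul (W k)).mono_set (hsub t ht)
    have hFT : (∑ k ∈ F, W k * ‖c t k‖ ^ 2) - ∑ k ∈ F, W k * ‖c 0 k‖ ^ 2 =
        ∫ s in (0:ℝ)..t, ∑ k ∈ F, W k * (2 * (inner ℝ (c s k) (g s k) -
          ν * lam k * ‖c s k‖ ^ 2)) := by
      rw [intervalIntegral.integral_finsetSum (fun k _ => hIntg k), ← Finset.sum_sub_distrib]
      refine Finset.sum_congr rfl fun k _ => ?_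
      rw [intervalIntegral.integral_const_mul, ← (ftc hcont hder hgb hT.le k).2 t ht]
      ring
    have hmono : (∫ s in (0:ℝ)..t, ∑ k ∈ F, W k * (2 * (inner ℝ (c s k) (g s k) -
          ν * lam k * ‖c s k‖ ^ 2))) ≤ ∫ s in (0:ℝ)..t, (-ν * (∑ k ∈ F, W k * lam k * ‖c s k‖ ^ 2) +
        (α s / ν * E s + β / ν)) := by
      have hsI : IntervalIntegrable (fun s => ∑ k ∈ F, W k * (2 * (inner ℝ (c s k) (g s k) -
          ν * lam k * ‖c s k‖ ^ 2))) volume 0 t := by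
        have := IntervalIntegrable.sum F (fun k _ => hIntg k)
        refine this.congr ?_
        exact fun s _ => by simp only [Finset.sum_apply]
      apply intervalIntegral.integral_mono_ae_restrict ht.1 hsI hφ
      rw [Filter.EventuallyLE, ← restrict_Ioc_eq_restrict_Icc, ae_restrict_iff' measurableSet_Ioc]
      rw [ae_restrict_iff' measurableSet_Ioc] at hG
      filter_upwards [hG] with s hG hs
      have hs' : s ∈ Ioc (0:ℝ) T := ⟨hs.1, hs.2.trans ht.2⟩
      have hg := hG hs'
      have hfs := hfin s (Ioc_subset_Icc_self hs')
      have hgt : eW (fun k => W k * (lam k)⁻¹) (g s) ≠ ⊤ :=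
        ne_top_of_le_ne_top (ENNReal.add_ne_top.2
          ⟨ENNReal.mul_ne_top ENNReal.ofReal_ne_top hfs, ENNReal.ofReal_ne_top⟩) hg
      have hW' : ∀ k, 0 ≤ W k * (lam k)⁻¹ := fun k =>
        mul_nonneg (hW k) (inv_nonneg.2 (lam_pos k).le)
      have h1 := finset_le_of_eW hW' hgt F
      have h2 : (eW (fun k => W k * (lam k)⁻¹) (g s)).toReal ≤ α s * E s + β := by
        apply ENNReal.toReal_le_of_le_ofReal (by have := hα0 s; have := hE0 s; positivity)
        rw [ENNReal.ofReal_add (mul_nonneg (hα0 s) (hE0 s)) hβ, ENNReal.ofReal_mul (hα0 s), hE,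
          ENNReal.ofReal_toReal hfs]
        exact hg
      have h3 : ∑ k ∈ F, W k * (2 * (inner ℝ (c s k) (g s k) - ν * lam k * ‖c s k‖ ^ 2)) ≤
          ∑ k ∈ F, (-ν * (W k * lam k * ‖c s k‖ ^ 2) + (W k * (lam k)⁻¹ * ‖g s k‖ ^ 2) / ν) := by
        refine Finset.sum_le_sum fun k _ => ?_
        have hl := lam_pos k
        have h4 := real_inner_le_norm (c s k) (g s k)
        have h5 : 2 * (‖c s k‖ * ‖g s k‖) ≤
            ν * lam k * ‖c s k‖ ^ 2 + (lam k)⁻¹ * ‖g s k‖ ^ 2 / ν := by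
          have h6 : ν * lam k * ‖c s k‖ ^ 2 + (lam k)⁻¹ * ‖g s k‖ ^ 2 / ν -
            2 * (‖c s k‖ * ‖g s k‖) = (ν * lam k * ‖c s k‖ - ‖g s k‖) ^ 2 / (ν * lam k) := by
            field_simp
            ring
          have h7 : 0 ≤ (ν * lam k * ‖c s k‖ - ‖g s k‖) ^ 2 / (ν * lam k) := by positivity
          linarith
        have h8 : 2 * (inner ℝ (c s k) (g s k) - ν * lam k * ‖c s k‖ ^ 2) ≤
            -ν * (lam k * ‖c s k‖ ^ 2) + (lam k)⁻¹ * ‖g s k‖ ^ 2 / ν := by linarith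
        refine (mul_le_mul_of_nonneg_left h8 (hW k)).trans (le_of_eq ?_)
        ring
      refine h3.trans ?_
      rw [Finset.sum_add_distrib, ← Finset.mul_sum, ← Finset.sum_div]
      have h9 : (∑ k ∈ F, W k * (lam k)⁻¹ * ‖g s k‖ ^ 2) / ν ≤ (α s * E s + β) / ν :=
        div_le_div_of_nonneg_right (h1.trans h2) hν.le
      have : (α s * E s + β) / ν = α s / ν * E s + β / ν := by ring
      linarith
    rw [← hFT] at hmono
    have := hmono
    rw [intervalIntegral.integral_add (hDi.const_mul (-ν)) (hαEt.add intervalIntegrable_const),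
        intervalIntegral.integral_add hαEt intervalIntegrable_const,
        intervalIntegral.integral_const_mul, intervalIntegral.integral_const] at this
    have h0 := finset_le_of_eW hW (hfin 0 ⟨le_rfl, hT.le⟩) F
    have h1 : (t - 0) • (β / ν) ≤ β * T / ν := by
      rw [smul_eq_mul, sub_zero, mul_comm β T, mul_div_assoc]
      exact mul_le_mul_of_nonneg_right ht.2 (by positivity)
    linarith
  have hDnn : ∀ F : Finset Freq, ∀ t ∈ Icc (0:ℝ) T,
      0 ≤ ∫ s in (0:ℝ)..t, ∑ k ∈ F, W k * lam k * ‖c s k‖ ^ 2 := fun F t ht =>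
    intervalIntegral.integral_nonneg ht.1 fun s _ => Finset.sum_nonneg fun k _ =>
      mul_nonneg (mul_nonneg (hW k) (lam_pos k).le) (by positivity)
  have hαν0 : ∀ t, 0 ≤ α t / ν := fun t => div_nonneg (hα0 t) hν.le
  have hInn : ∀ t ∈ Icc (0:ℝ) T, 0 ≤ ∫ s in (0:ℝ)..t, α s / ν * E s := fun t ht =>
    intervalIntegral.integral_nonneg ht.1 fun s _ => mul_nonneg (hαν0 s) (hE0 s)
  have hgr : ∀ t ∈ Icc (0:ℝ) T, E t ≤ A + ∫ s in (0:ℝ)..t, α s / ν * E s := by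
    intro t ht
    apply ENNReal.toReal_le_of_le_ofReal (by have := hInn t ht; positivity)
    apply eW_le_of_finset hW
    intro F
    have h1 := key F t ht
    have h2 := mul_nonneg hν.le (hDnn F t ht)
    linarith
  have hαν : IntervalIntegrable (fun t => α t / ν) volume 0 T := hα.div_const ν
  have hbd : ∀ t ∈ Icc (0:ℝ) T, A + (∫ s in (0:ℝ)..t, α s / ν * E s) ≤ 2 ^ n * A := by
    intro t ht
    refine gron hT.le hA0 hαν hαE hαν0 hE0 hgr n t ht (le_trans ?_ hn)
    have hTm : T ∈ Icc (0:ℝ) T := ⟨hT.le, le_rfl⟩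
    apply intervalIntegral.integral_mono_interval le_rfl ht.1 ht.2
      (Filter.Eventually.of_forall hαν0) hαν
  constructor
  · intro t ht
    rw [← ENNReal.ofReal_toReal (hfin t ht)]
    exact ENNReal.ofReal_le_ofReal ((hgr t ht).trans (hbd t ht))
  · apply lint_le hT.le hcont (fun k => mul_nonneg (hW k) (lam_pos k).le)
    intro F
    have hTm : T ∈ Icc (0:ℝ) T := ⟨hT.le, le_rfl⟩
    have h1 := key F T hTm
    have h2 := hbd T hTm
    have h3 : 0 ≤ ∑ k ∈ F, W k * ‖c T k‖ ^ 2 := Finset.sum_nonneg fun k _ =>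
      mul_nonneg (hW k) (by positivity)
    rw [le_div_iff₀ hν]
    linarith

/-- Standing setting: a strong solution with `Ḣ¹` initial condition. -/
lemma sol_fin {ν T : ℝ} {f θ : Coef} {u : ℝ → Coef} (h : IsNSSol ν f T θ u)
    (hθ : eSq 1 θ ≠ ⊤) : ∀ t ∈ Icc (0:ℝ) T, eSq 1 (u t) ≠ ⊤ := by
  intro t ht
  rcases eq_or_lt_of_le ht.1 with h0 | h0
  · rw [← h0, h.init]; exact hθ
  · have := (finH_iff 2 (u t)).1 (h.memL2H2.1 t ⟨h0, ht.2⟩).2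
    exact ne_top_of_le_ne_top this (eSq_mono (by norm_num) _)

lemma lam_rpow_nonneg (α : ℝ) (k : Freq) : 0 ≤ lam k ^ α := Real.rpow_nonneg (lam_pos k).le α

lemma eSq_sub_le (α : ℝ) (c d : Coef) : eSq α (c - d) ≤ 2 * eSq α c + 2 * eSq α d :=
  eW_sub_le (lam_rpow_nonneg α) c d

lemma eSq_sub_ne_top {α : ℝ} {c d : Coef} (hc : eSq α c ≠ ⊤) (hd : eSq α d ≠ ⊤) :
    eSq α (c - d) ≠ ⊤ :=
  ne_top_of_le_ne_top (ENNReal.add_ne_top.2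
    ⟨ENNReal.mul_ne_top (by simp) hc, ENNReal.mul_ne_top (by simp) hd⟩) (eSq_sub_le α c d)

lemma coef_sq_le {α : ℝ} (hα : 0 ≤ α) {c : Coef} (hc : eSq α c ≠ ⊤) (k : Freq) :
    ‖c k‖ ^ 2 ≤ hSq α c := by
  rw [hSq_eq]
  have := finset_le_of_eW (lam_rpow_nonneg α) hc {k}
  rw [Finset.sum_singleton] at this
  refine le_trans ?_ this
  have h1 : 1 ≤ lam k ^ α := Real.one_le_rpow (one_le_lam k) hα
  nlinarith [sq_nonneg ‖c k‖]

lemma hSq_nonneg (α : ℝ) (c : Coef) : 0 ≤ hSq α c := by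
  rw [hSq_eq]; exact ENNReal.toReal_nonneg

lemma hN_sq (α : ℝ) (c : Coef) : hN α c ^ 2 = hSq α c := Real.sq_sqrt (hSq_nonneg α c)

lemma sol_cont {ν T : ℝ} {f θ : Coef} {u : ℝ → Coef} (h : IsNSSol ν f T θ u)
    (hθ : eSq 1 θ ≠ ⊤) (k : Freq) : ContinuousOn (fun s => u s k) (Icc 0 T) := by
  have hf := sol_fin h hθ
  rw [Metric.continuousOn_iff]
  intro t ht ε hε
  obtain ⟨δ, hδ, hh⟩ := h.contH1 t ht ε hε
  refine ⟨δ, hδ, fun s hs hst => ?_⟩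
  have h1 := hh s hs (by simpa [Real.dist_eq] using hst)
  have h2 := coef_sq_le (α := 1) zero_le_one (eSq_sub_ne_top (hf s hs) (hf t ht)) k
  rw [← hN_sq] at h2
  rw [dist_eq_norm]
  have h3 : ‖u s k - u t k‖ ≤ hN 1 (u s - u t) :=
    abs_le_of_sq_le_sq' h2 (Real.sqrt_nonneg _) |>.2
  exact h3.trans_lt h1

lemma sol_bdd {ν T : ℝ} {f θ : Coef} {u : ℝ → Coef} (h : IsNSSol ν f T θ u)
    (hθ : eSq 1 θ ≠ ⊤) : ∃ M : ℝ, 0 ≤ M ∧ ∀ t ∈ Icc (0:ℝ) T, eSq 1 (u t) ≤ ENNReal.ofReal M := by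
  have hf := sol_fin h hθ
  have key : ∃ M : ℝ, ∀ t ∈ Icc (0:ℝ) T, hSq 1 (u t) ≤ M := by
    refine isCompact_Icc.induction_on (p := fun S => ∃ M : ℝ, ∀ t ∈ S, t ∈ Icc (0:ℝ) T →
      hSq 1 (u t) ≤ M) ?_ ?_ ?_ ?_ |>.imp fun M hM t ht => hM t ht ht
    · exact ⟨0, by simp⟩
    · rintro S S' hS ⟨M, hM⟩
      exact ⟨M, fun t ht => hM t (hS ht)⟩
    · rintro S S' ⟨M, hM⟩ ⟨M', hM'⟩
      refine ⟨max M M', fun t ht hI => ?_⟩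
      rcases ht with ht | ht
      · exact (hM t ht hI).trans (le_max_left _ _)
      · exact (hM' t ht hI).trans (le_max_right _ _)
    · intro t ht
      obtain ⟨δ, hδ, hh⟩ := h.contH1 t ht 1 one_pos
      refine ⟨Metric.ball t δ, mem_nhdsWithin_of_mem_nhds (Metric.ball_mem_nhds t hδ),
        2 * 1 + 2 * hSq 1 (u t), fun s hs hI => ?_⟩
      have h1 := hh s hI (by simpa [Real.dist_eq] using hs)
      have hd := eSq_sub_ne_top (hf s hI) (hf t ht)
      have hn : eSq 1 (-u t) = eSq 1 (u t) := by simp [eSq, eW]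
      have h2 := eSq_sub_le 1 (u s - u t) (-u t)
      rw [sub_neg_eq_add, sub_add_cancel, hn] at h2
      have h3 := ENNReal.toReal_mono (ENNReal.add_ne_top.2
        ⟨ENNReal.mul_ne_top (by simp) hd, ENNReal.mul_ne_top (by simp) (hf t ht)⟩) h2
      rw [ENNReal.toReal_add (ENNReal.mul_ne_top (by simp) hd)
        (ENNReal.mul_ne_top (by simp) (hf t ht)), ENNReal.toReal_mul, ENNReal.toReal_mul,
        ← hSq_eq, ← hSq_eq, ← hSq_eq] at h3
      have h4 : hSq 1 (u s - u t) ≤ 1 := by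
        rw [← hN_sq]
        have := Real.sqrt_nonneg (hSq 1 (u s - u t))
        have h5 : 0 ≤ hN 1 (u s - u t) := this
        nlinarith
      simp only [ENNReal.toReal_ofNat] at h3
      linarith
  obtain ⟨M, hM⟩ := key
  refine ⟨max M 0, le_max_right _ _, fun t ht => ?_⟩
  rw [← ENNReal.ofReal_toReal (hf t ht), ← hSq_eq]
  exact ENNReal.ofReal_le_ofReal ((hM t ht).trans (le_max_left _ _))

lemma sol_der {ν T : ℝ} {f θ : Coef} {u : ℝ → Coef} (h : IsNSSol ν f T θ u) (k : Freq) :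
    ∀ t ∈ Ioc (0:ℝ) T, HasDerivAt (fun s => u s k)
      ((f - Bc (u t) (u t)) k - ((ν * lam k : ℝ) : ℂ) * u t k) t := by
  intro t ht
  have := h.deriv k t ht
  convert this using 1
  change f k - Bc (u t) (u t) k - _ = _
  ring

lemma conv_le_eSq (c d : Coef) (k : ℤ × ℤ) :
    conv (ec c) (ec d) k ^ 2 ≤ eSq 1 c * eSq 1 d := by
  refine (conv_sq_le _ _ k).trans ?_
  rw [ec_sq_eq, ec_sq_eq]
  exact mul_le_mul' (eSq_mono zero_le_one c) (eSq_mono zero_le_one d)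

lemma Bc_bdd {M : ℝ} (hM : 0 ≤ M) {c : Coef} (h : eSq 1 c ≤ ENNReal.ofReal M) (k : Freq) :
    ‖Bc c c k‖ ≤ √(lam k) * M := by
  have h1 := Bc_le2 c c k
  have h2 : conv (ec c) (ec c) k.1 ≤ ENNReal.ofReal M := by
    have := (conv_le_eSq c c k.1).trans (mul_le_mul' h h)
    rw [← sq] at this
    exact (ENNReal.pow_le_pow_left_iff two_ne_zero).1 this
  have h3 := h1.trans (mul_le_mul' le_rfl h2)
  rw [← ENNReal.ofReal_mul (Real.sqrt_nonneg _), ← ofReal_norm] at h3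
  exact (ENNReal.ofReal_le_ofReal_iff (by positivity)).1 h3

lemma sol_gb {ν T : ℝ} {f θ : Coef} {u : ℝ → Coef} (h : IsNSSol ν f T θ u)
    (hθ : eSq 1 θ ≠ ⊤) (k : Freq) :
    ∃ X : ℝ, ∀ t ∈ Ioc (0:ℝ) T, ‖Bc (u t) (u t) k‖ ≤ X := by
  obtain ⟨M, hM0, hM⟩ := sol_bdd h hθ
  exact ⟨_, fun t ht => Bc_bdd hM0 (hM t (Ioc_subset_Icc_self ht)) k⟩

/-! ### Cancellation `⟨B[u,u], A u⟩ = 0` -/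

def nsq (n : ℤ × ℤ) : ℝ := (n.1 : ℝ) ^ 2 + (n.2 : ℝ) ^ 2

def cx (c : Coef) (n : ℤ × ℤ) : ℂ := open Classical in if h : n ≠ 0 then c ⟨n, h⟩ else 0

lemma cx_zero (c : Coef) : cx c 0 = 0 := by simp [cx]

lemma cx_of_ne (c : Coef) {n : ℤ × ℤ} (h : n ≠ 0) : cx c n = c ⟨n, h⟩ := by simp [cx, h]

lemma cx_enorm (c : Coef) (n : ℤ × ℤ) : ‖cx c n‖ₑ = ec c n := by
  unfold cx ec
  split_ifs <;> simp

def gam (c : Coef) (n : ℤ × ℤ) : ℂ := cx c n / ((√(nsq n) : ℝ) : ℂ)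

lemma gam_zero (c : Coef) : gam c 0 = 0 := by simp [gam, cx_zero]

lemma nsq_nonneg (n : ℤ × ℤ) : 0 ≤ nsq n := by unfold nsq; positivity

lemma nsq_pos {n : ℤ × ℤ} (h : n ≠ 0) : 0 < nsq n := lt_of_lt_of_le one_pos (one_le_nsq h)

lemma nsq_neg (n : ℤ × ℤ) : nsq (-n) = nsq n := by simp [nsq]

lemma gam_mul (c : Coef) (n : ℤ × ℤ) : gam c n * ((√(nsq n) : ℝ) : ℂ) = cx c n := by
  by_cases h : n = 0
  · subst h; simp [gam_zero, cx_zero]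
  · unfold gam
    have : ((√(nsq n) : ℝ) : ℂ) ≠ 0 := by
      exact_mod_cast (Real.sqrt_pos.2 (nsq_pos h)).ne'
    field_simp

lemma gam_neg {c : Coef} (hc : IsReal c) (n : ℤ × ℤ) :
    gam c (-n) = - (starRingEnd ℂ) (gam c n) := by
  by_cases h : n = 0
  · subst h; simp [gam_zero]
  · have h1 := hc ⟨n, h⟩
    have h2 : c (fneg ⟨n, h⟩) = cx c (-n) := by
      rw [cx_of_ne c (neg_ne_zero.2 h)]; rfl
    rw [h2, ← cx_of_ne c h] at h1
    unfold gam
    rw [h1, nsq_neg, map_div₀, Complex.conj_ofReal, neg_div]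

/-- cross product -/
def crs (m k : ℤ × ℤ) : ℝ := (m.2 : ℝ) * k.1 - (m.1 : ℝ) * k.2

def dt (m k : ℤ × ℤ) : ℝ := (m.1 : ℝ) * k.1 + (m.2 : ℝ) * k.2

def gg (c : Coef) (k m : ℤ × ℤ) : ℂ := gam c m * gam c (k - m) * (starRingEnd ℂ) (gam c k)

def t1 (c : Coef) (k m : ℤ × ℤ) : ℂ := gg c k m * ((nsq k * dt (k - m) k * crs m k : ℝ) : ℂ)

def t2 (c : Coef) (k m : ℤ × ℤ) : ℂ := gg c k m * ((nsq k * nsq (k - m) * crs m k : ℝ) : ℂ)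

lemma bt_eq_t1 (c : Coef) (k m : Freq) :
    bt c c k m * ((knormSq k : ℝ) : ℂ) * (starRingEnd ℂ) (c k) = t1 c k.1 m.1 := by
  unfold bt
  split_ifs with h
  · have e1 : c m = gam c m.1 * ((√(nsq m.1) : ℝ) : ℂ) := by
      rw [gam_mul]; exact (cx_of_ne c m.2).symm
    have e2 : c ⟨k.1 - m.1, h⟩ = gam c (k.1 - m.1) * ((√(nsq (k.1 - m.1)) : ℝ) : ℂ) := by
      rw [gam_mul]; exact (cx_of_ne c h).symm
    have e3 : c k = gam c k.1 * ((√(nsq k.1) : ℝ) : ℂ) := by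
      rw [gam_mul]; exact (cx_of_ne c k.2).symm
    rw [e1, e2, e3, map_mul, Complex.conj_ofReal]
    unfold t1 gg
    have key : √(nsq m.1) * √(nsq (k.1 - m.1)) * √(nsq k.1) *
        (dotR (evec m) (fvec ⟨k.1 - m.1, h⟩) * dotR (evec ⟨k.1 - m.1, h⟩) (evec k)) * knormSq k =
        nsq k.1 * dt (k.1 - m.1) k.1 * crs m.1 k.1 := by
      have p1 := (Real.sqrt_pos.2 (nsq_pos m.2))
      have p2 := (Real.sqrt_pos.2 (nsq_pos h))
      have p3 := (Real.sqrt_pos.2 (nsq_pos k.2))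
      have q1 : √(knormSq m) = √(nsq m.1) := rfl
      have q2 : √(knormSq (⟨k.1 - m.1, h⟩ : Freq)) = √(nsq (k.1 - m.1)) := rfl
      have q3 : √(knormSq k) = √(nsq k.1) := rfl
      have q4 : knormSq k = nsq k.1 := rfl
      unfold evec fvec dotR dt crs
      rw [q1, q2, q3, q4]
      simp only [Prod.fst_sub, Prod.snd_sub, Int.cast_sub]
      field_simp
      ring
    rw [← key]
    push_cast
    ring
  · push Not at h
    unfold t1 gg
    rw [h, gam_zero]
    simp

lemma gg_norm (c : Coef) (k m : ℤ × ℤ) :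
    ‖gg c k m‖ * (√(nsq m) * √(nsq (k - m)) * √(nsq k)) = ‖cx c m‖ * ‖cx c (k - m)‖ * ‖cx c k‖ := by
  rw [← gam_mul c m, ← gam_mul c (k - m), ← gam_mul c k]
  unfold gg
  simp only [norm_mul, RCLike.norm_conj, Complex.norm_real, Real.norm_of_nonneg (Real.sqrt_nonneg _)]
  ring

lemma crs_le (k m : ℤ × ℤ) : |crs m k| ≤ √(nsq m) * √(nsq (k - m)) := by
  rw [← Real.sqrt_mul (nsq_nonneg _)]
  apply Real.abs_le_sqrt
  unfold crs nsq
  simp only [Prod.fst_sub, Prod.snd_sub, Int.cast_sub]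
  nlinarith [sq_nonneg ((m.1:ℝ) * (k.1 - m.1) + (m.2:ℝ) * (k.2 - m.2))]

lemma nsq_le_lamG (n : ℤ × ℤ) : nsq n ≤ lamG n := by
  have h1 := nsq_nonneg n
  have h2 := four_pi_sq
  unfold lamG; unfold nsq at *
  nlinarith

lemma t2_norm (c : Coef) (k m : ℤ × ℤ) :
    ‖t2 c k m‖ ≤ (√(lamG k) * ‖cx c k‖) * (‖cx c m‖ * (lamG (k - m) * ‖cx c (k - m)‖)) := by
  have h0 := gg_norm c k m
  have h1 := crs_le k m
  have h2 : nsq k = √(nsq k) * √(nsq k) := (Real.mul_self_sqrt (nsq_nonneg k)).symm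
  calc ‖t2 c k m‖ = ‖gg c k m‖ * (nsq k * nsq (k - m) * |crs m k|) := by
        unfold t2
        rw [norm_mul, Complex.norm_real, Real.norm_eq_abs, abs_mul, abs_mul,
          abs_of_nonneg (nsq_nonneg _), abs_of_nonneg (nsq_nonneg _)]
    _ ≤ ‖gg c k m‖ * (nsq k * nsq (k - m) * (√(nsq m) * √(nsq (k - m)))) := by
        have := nsq_nonneg k
        have := nsq_nonneg (k - m)
        gcongr
    _ = (‖gg c k m‖ * (√(nsq m) * √(nsq (k - m)) * √(nsq k))) * (√(nsq k) * nsq (k - m)) := by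
        nth_rewrite 1 [h2]; ring
    _ = (√(nsq k) * ‖cx c k‖) * (‖cx c m‖ * (nsq (k - m) * ‖cx c (k - m)‖)) := by
        rw [h0]; ring
    _ ≤ _ := by
        have h3 := nsq_le_lamG k
        have h4 := nsq_le_lamG (k - m)
        have := lamG_nonneg (k - m)
        have := nsq_nonneg (k - m)
        gcongr

lemma tri_ne_top {c : Coef} (hc : eSq 2 c ≠ ⊤) :
    ∑' k, wt (fun n => √(lamG n)) c k * conv (ec c) (wt lamG c) k ≠ ⊤ := by
  have h1 := cs (wt (fun n => √(lamG n)) c) (conv (ec c) (wt lamG c))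
  have e1 : ∑' n, wt (fun n => √(lamG n)) c n ^ 2 = eSq 1 c := by
    have := wt_sq_rpow (1/2) c
    simpa [Real.sqrt_eq_rpow] using this
  have e2 : ∑' n, wt lamG c n ^ 2 = eSq 2 c := by
    have := wt_sq_rpow 1 c
    simpa using this
  rw [e1] at h1
  have h2 := h1.trans (mul_le_mul' le_rfl (young _ _))
  rw [e2] at h2
  have h3 := h2.trans (mul_le_mul' le_rfl (mul_le_mul' (l1_ec c) le_rfl))
  intro h
  rw [h] at h3
  have h4 : eSq 1 c ≠ ⊤ := ne_top_of_le_ne_top hc (eSq_mono (by norm_num) c)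
  have : eSq 1 c * (S4 * eSq 2 c * eSq 2 c) ≠ ⊤ :=
    ENNReal.mul_ne_top h4 (ENNReal.mul_ne_top (ENNReal.mul_ne_top S4_ne_top hc) hc)
  simp at h3
  exact this h3

lemma t2_summable {c : Coef} (hc : eSq 2 c ≠ ⊤) :
    Summable (fun p : (ℤ × ℤ) × (ℤ × ℤ) => t2 c p.1 p.2) := by
  have : ∑' p : (ℤ × ℤ) × (ℤ × ℤ), ‖t2 c p.1 p.2‖ₑ ≠ ⊤ := by
    refine ne_top_of_le_ne_top (tri_ne_top hc) ?_
    rw [ENNReal.tsum_prod (f := fun k m => ‖t2 c k m‖ₑ)]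
    refine ENNReal.tsum_le_tsum fun k => ?_
    unfold conv
    rw [← ENNReal.tsum_mul_left]
    refine ENNReal.tsum_le_tsum fun m => ?_
    unfold wt
    rw [← cx_enorm, ← cx_enorm, ← cx_enorm, ← ofReal_norm, ← ofReal_norm, ← ofReal_norm,
      ← ofReal_norm, ← ENNReal.ofReal_mul (Real.sqrt_nonneg _),
      ← ENNReal.ofReal_mul (lamG_nonneg _), ← ENNReal.ofReal_mul (norm_nonneg _),
      ← ENNReal.ofReal_mul (by positivity)]
    exact ENNReal.ofReal_le_ofReal (t2_norm c k m)
  have h2 := ENNReal.summable_toReal this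
  apply Summable.of_norm
  simpa using h2

lemma t2_tsum {c : Coef} (hr : IsReal c) (hc : eSq 2 c ≠ ⊤) :
    ∑' k, ∑' m, t2 c k m = 0 := by
  have hs := t2_summable hc
  have h1 := hs.tsum_prod
  rw [← h1]
  let e : (ℤ × ℤ) × (ℤ × ℤ) ≃ (ℤ × ℤ) × (ℤ × ℤ) :=
    { toFun := fun p => (p.2 - p.1, p.2)
      invFun := fun p => (p.2 - p.1, p.2)
      left_inv := fun p => by simp
      right_inv := fun p => by simp }
  have h2 := e.tsum_eq (fun p => t2 c p.1 p.2)
  have h3 : ∀ p : (ℤ × ℤ) × (ℤ × ℤ), t2 c (e p).1 (e p).2 = - t2 c p.1 p.2 := by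
    rintro ⟨k, m⟩
    change t2 c (m - k) m = - t2 c k m
    have a1 : m - k - m = -k := by abel
    have a2 : m - k = -(k - m) := by abel
    unfold t2 gg
    rw [a1, a2, gam_neg hr, gam_neg hr, nsq_neg, nsq_neg]
    have a3 : crs m (-(k - m)) = - crs m k := by
      unfold crs
      simp only [Prod.fst_sub, Prod.snd_sub, Prod.fst_neg, Prod.snd_neg, Int.cast_sub, Int.cast_neg]
      ring
    rw [a3]
    simp only [map_neg, Complex.conj_conj]
    push_cast
    ring
  simp only [h3, tsum_neg] at h2
  have h4 : ∀ z : ℂ, -z = z → z = 0 := fun z hz => by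
    have h5 : (2:ℂ) * z = 0 := by linear_combination -hz
    simpa using h5
  exact h4 _ h2

lemma t1_tsum {c : Coef} (hc : eSq 2 c ≠ ⊤) (k : Freq) :
    ∑' m : Freq, t1 c k.1 m.1 = ∑' m, t2 c k.1 m := by
  have h0 : eSq 0 c ≠ ⊤ := ne_top_of_le_ne_top hc (eSq_mono (by norm_num) c)
  have hs1' : Summable (fun m : Freq => t1 c k.1 m.1) := by
    have := ((bt_summable h0 h0 k).mul_right ((knormSq k : ℝ) : ℂ)).mul_right
      ((starRingEnd ℂ) (c k))
    simpa only [bt_eq_t1] using this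
  have hz : t1 c k.1 0 = 0 := by simp [t1, gg, gam_zero]
  rw [tsum_freq_eq (fun m => t1 c k.1 m) hz]
  have hs1 : Summable (fun m => t1 c k.1 m) := by
    refine (Function.Injective.summable_iff (g := fun m : Freq => m.1)
      Subtype.val_injective ?_).1 hs1'
    intro n hn
    have : n = 0 := by
      by_contra h
      exact hn ⟨⟨n, h⟩, rfl⟩
    rw [this, hz]
  have hs2 : Summable (fun m => t2 c k.1 m) := (t2_summable hc).prod_factor k.1
  have hd : ∑' m, (t1 c k.1 m - t2 c k.1 m) = 0 := by
    have h2 := (Equiv.subLeft k.1).tsum_eq (fun m => t1 c k.1 m - t2 c k.1 m)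
    have h3 : ∀ m, t1 c k.1 (Equiv.subLeft k.1 m) - t2 c k.1 (Equiv.subLeft k.1 m) =
        - (t1 c k.1 m - t2 c k.1 m) := by
      intro m
      change t1 c k.1 (k.1 - m) - t2 c k.1 (k.1 - m) = _
      have hdiff : ∀ m, t1 c k.1 m - t2 c k.1 m =
          gg c k.1 m * ((nsq k.1 * (dt (k.1 - m) m * crs m k.1) : ℝ) : ℂ) := by
        intro m
        unfold t1 t2
        rw [← mul_sub, ← Complex.ofReal_sub]
        congr 2
        unfold dt nsq
        simp only [Prod.fst_sub, Prod.snd_sub, Int.cast_sub]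
        ring
      rw [hdiff, hdiff]
      have a1 : gg c k.1 (k.1 - m) = gg c k.1 m := by
        unfold gg
        rw [sub_sub_cancel]; ring
      have a2 : dt (k.1 - (k.1 - m)) (k.1 - m) * crs (k.1 - m) k.1 =
          - (dt (k.1 - m) m * crs m k.1) := by
        unfold dt crs
        simp only [Prod.fst_sub, Prod.snd_sub, Int.cast_sub]
        ring
      rw [a1, a2]
      push_cast
      ring
    simp only [h3, tsum_neg] at h2
    have h4 : ∀ z : ℂ, -z = z → z = 0 := fun z hz => by
      have h5 : (2:ℂ) * z = 0 := by linear_combination -hz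
      simpa using h5
    exact h4 _ h2
  rw [hs1.tsum_sub hs2] at hd
  exact sub_eq_zero.1 hd

lemma cancel {c : Coef} (hr : IsReal c) (hc : eSq 2 c ≠ ⊤) :
    HasSum (fun k : Freq => lam k * (inner ℝ (c k) (Bc c c k) : ℝ)) 0 := by
  have hs := t2_summable hc
  have h1 : HasSum (fun k => ∑' m, t2 c k m) 0 := by
    have := hs.prod.hasSum
    rwa [t2_tsum hr hc] at this
  have h2 : HasSum (fun k : Freq => ∑' m, t2 c k.1 m) 0 := by
    refine (Function.Injective.hasSum_iff (g := fun m : Freq => m.1)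
      Subtype.val_injective ?_).2 h1
    intro n hn
    have : n = 0 := by
      by_contra h
      exact hn ⟨⟨n, h⟩, rfl⟩
    rw [this]
    simp [t2, gg, gam_zero]
  have h3 := h2.mul_left ((((4 * Real.pi ^ 2 : ℝ)) : ℂ) * (((2 * Real.pi : ℝ) : ℂ) * Complex.I))
  rw [mul_zero] at h3
  have h4 := Complex.hasSum_re h3
  rw [Complex.zero_re] at h4
  convert h4 using 1
  ext k
  rw [← t1_tsum hc k]
  simp only [← bt_eq_t1]
  rw [tsum_mul_right, tsum_mul_right, Complex.inner, Bc_eq]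
  have : lam k = 4 * Real.pi ^ 2 * knormSq k := rfl
  rw [this, ← Complex.re_ofReal_mul]
  congr 1
  push_cast
  ring

lemma Bsum_le (c : Coef) :
    (∑' k : Freq, ENNReal.ofReal (lam k) * ‖c k‖ₑ * ‖Bc c c k‖ₑ) ^ 2 ≤
      S4 * eSq 1 c * eSq 2 c ^ 2 := by
  refine (cs (fun k : Freq => ENNReal.ofReal (lam k) * ‖c k‖ₑ) (fun k => ‖Bc c c k‖ₑ)).trans ?_
  have e1 : ∑' k : Freq, (ENNReal.ofReal (lam k) * ‖c k‖ₑ) ^ 2 = eSq 2 c := by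
    unfold eSq eW
    congr 1; ext k
    rw [ofReal_sq_enorm _ (lam_pos k).le]
    norm_num
  have e2 : ∑' k : Freq, ‖Bc c c k‖ₑ ^ 2 ≤ S4 * eSq 2 c * eSq 1 c := by
    calc _ ≤ ∑' k : Freq, conv (ec c) (wt (fun n => √(lamG n)) c) k.1 ^ 2 :=
          ENNReal.tsum_le_tsum fun k => pow_le_pow_left' (Bc_le1 c c k) 2
      _ ≤ _ := (tsum_freq_le (fun k => conv (ec c) (wt (fun n => √(lamG n)) c) k ^ 2)).trans
          (young _ _)
      _ ≤ _ := by
        refine mul_le_mul' (l1_ec c) (le_of_eq ?_)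
        have := wt_sq_rpow (1/2) c
        simpa [Real.sqrt_eq_rpow] using this
  rw [e1]
  refine (mul_le_mul' le_rfl e2).trans (le_of_eq ?_)
  ring

lemma r_bound {M : ℝ} (hM : 0 ≤ M) {c : Coef} (h1 : eSq 1 c ≤ ENNReal.ofReal M)
    (h2 : FinH 2 c) (F : Finset Freq) :
    ‖∑ k ∈ F, lam k * (inner ℝ (c k) (Bc c c k) : ℝ)‖ ≤ √(S4.toReal * M) * hSq 2 c := by
  have a1 : ‖∑ k ∈ F, lam k * (inner ℝ (c k) (Bc c c k) : ℝ)‖ ≤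
      ∑ k ∈ F, lam k * ‖c k‖ * ‖Bc c c k‖ := by
    refine (norm_sum_le _ _).trans (Finset.sum_le_sum fun k _ => ?_)
    rw [norm_mul, Real.norm_of_nonneg (lam_pos k).le, mul_assoc]
    exact mul_le_mul_of_nonneg_left (norm_inner_le_norm _ _) (lam_pos k).le
  refine a1.trans ?_
  have hnn : ∀ k ∈ F, 0 ≤ lam k * ‖c k‖ * ‖Bc c c k‖ := fun k _ => by
    have := lam_pos k
    positivity
  have a2 : ENNReal.ofReal (∑ k ∈ F, lam k * ‖c k‖ * ‖Bc c c k‖) ≤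
      ∑' k : Freq, ENNReal.ofReal (lam k) * ‖c k‖ₑ * ‖Bc c c k‖ₑ := by
    rw [ENNReal.ofReal_sum_of_nonneg hnn]
    refine le_trans (le_of_eq ?_) (ENNReal.sum_le_tsum F)
    refine Finset.sum_congr rfl fun k _ => ?_
    have := lam_pos k
    rw [ENNReal.ofReal_mul (by positivity), ENNReal.ofReal_mul (by positivity), ofReal_norm,
      ofReal_norm]
  have a3 := (pow_le_pow_left' a2 2).trans ((Bsum_le c).trans
    (mul_le_mul' (mul_le_mul' le_rfl h1) le_rfl))
  rw [← ofReal_hSq h2, ← ENNReal.ofReal_toReal S4_ne_top,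
    ← ENNReal.ofReal_mul ENNReal.toReal_nonneg, ← ENNReal.ofReal_pow (Finset.sum_nonneg hnn),
    ← ENNReal.ofReal_pow (hSq_nonneg 2 c), ← ENNReal.ofReal_mul (by positivity),
    ENNReal.ofReal_le_ofReal_iff (mul_nonneg (by positivity) (by positivity))] at a3
  have hS : 0 ≤ S4.toReal * M := by positivity
  have a4 : (∑ k ∈ F, lam k * ‖c k‖ * ‖Bc c c k‖) ^ 2 ≤ (√(S4.toReal * M) * hSq 2 c) ^ 2 := by
    rw [mul_pow, Real.sq_sqrt hS]; exact a3
  exact (abs_le_of_sq_le_sq' a4 (mul_nonneg (Real.sqrt_nonneg _) (hSq_nonneg 2 c))).2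

lemma base {T ν : ℝ} (hT : 0 < T) (hν : 0 < ν) {f θ : Coef} {u : ℝ → Coef}
    (h : IsNSSol ν f T θ u) (hθ : eSq 1 θ ≠ ⊤) (hf : eSq 0 f ≠ ⊤) :
    (∀ t ∈ Icc (0:ℝ) T, eSq 1 (u t) ≤ ENNReal.ofReal (hSq 1 θ + T * hSq 0 f / ν)) ∧
      ∫⁻ t in Ioc 0 T, eSq 2 (u t) ≤ ENNReal.ofReal ((hSq 1 θ + T * hSq 0 f / ν) / ν) := by
  set D := hSq 1 θ + T * hSq 0 f / ν with hD
  obtain ⟨M, hM0, hM⟩ := sol_bdd h hθ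
  have hcont := sol_cont h hθ
  have hder := sol_der h
  have hgb : ∀ k, ∃ X : ℝ, ∀ t ∈ Ioc (0:ℝ) T, ‖(f - Bc (u t) (u t)) k‖ ≤ X := by
    intro k
    obtain ⟨X, hX⟩ := sol_gb h hθ k
    exact ⟨‖f k‖ + X, fun t ht => (norm_sub_le _ _).trans (add_le_add le_rfl (hX t ht))⟩
  have hftc := ftc hcont hder hgb hT.le
  have hcf : ∀ k, IntervalIntegrable (fun s => (inner ℝ (u s k) (f k) : ℝ)) volume 0 T := by
    intro k
    apply ContinuousOn.intervalIntegrable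
    rw [uIcc_of_le hT.le]
    exact (hcont k).inner continuousOn_const
  have hB : ∀ k, IntervalIntegrable (fun s => (inner ℝ (u s k) (Bc (u s) (u s) k) : ℝ))
      volume 0 T := by
    intro k
    refine ((hcf k).sub (hftc k).1).congr ?_
    intro s _
    change inner ℝ (u s k) (f k) - inner ℝ (u s k) (f k - Bc (u s) (u s) k) = _
    rw [inner_sub_right]
    ring
  have hn2 : ∀ k (x : ℝ), IntervalIntegrable (fun s => x * ‖u s k‖ ^ 2) volume 0 T := by
    intro k x
    apply ContinuousOn.intervalIntegrable
    rw [uIcc_of_le hT.le]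
    exact ((hcont k).norm.pow 2).const_mul _
  have hsum : ∀ (F : Finset Freq) (φ : Freq → ℝ → ℝ), (∀ k, IntervalIntegrable (φ k) volume 0 T) →
      IntervalIntegrable (fun s => ∑ k ∈ F, φ k s) volume 0 T := by
    intro F φ hφ
    have := IntervalIntegrable.sum F (fun k _ => hφ k)
    refine this.congr ?_
    exact fun s _ => by simp only [Finset.sum_apply]
  have key : ∀ F : Finset Freq, ∀ t ∈ Icc (0:ℝ) T,
      (∑ k ∈ F, lam k * ‖u t k‖ ^ 2) + ν * (∫ s in (0:ℝ)..t, ∑ k ∈ F, lam k ^ 2 * ‖u s k‖ ^ 2)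
        ≤ D - 2 * ∫ s in (0:ℝ)..t, ∑ k ∈ F, lam k * (inner ℝ (u s k) (Bc (u s) (u s) k) : ℝ) := by
    intro F t ht
    have hsub : uIcc 0 t ⊆ uIcc 0 T := by
      rw [uIcc_of_le hT.le, uIcc_of_le ht.1]
      exact Icc_subset_Icc le_rfl ht.2
    have i1 := (hsum F (fun k s => lam k ^ 2 * ‖u s k‖ ^ 2) (fun k => hn2 k _)).mono_set hsub
    have i2 := (hsum F (fun k s => lam k * (inner ℝ (u s k) (Bc (u s) (u s) k) : ℝ))
      (fun k => (hB k).const_mul _)).mono_set hsub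
    have i3 : ∀ k, IntervalIntegrable (fun s => lam k * (2 * (inner ℝ (u s k)
        ((f - Bc (u s) (u s)) k) - ν * lam k * ‖u s k‖ ^ 2))) volume 0 T := fun k =>
      (((hftc k).1.sub (hn2 k _)).const_mul 2).const_mul (lam k)
    have hFT : (∑ k ∈ F, lam k * ‖u t k‖ ^ 2) - ∑ k ∈ F, lam k * ‖u 0 k‖ ^ 2 =
        ∫ s in (0:ℝ)..t, ∑ k ∈ F, lam k * (2 * (inner ℝ (u s k)
        ((f - Bc (u s) (u s)) k) - ν * lam k * ‖u s k‖ ^ 2)) := by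
      rw [intervalIntegral.integral_finsetSum (fun k _ => (i3 k).mono_set hsub),
        ← Finset.sum_sub_distrib]
      refine Finset.sum_congr rfl fun k _ => ?_
      rw [intervalIntegral.integral_const_mul, ← (hftc k).2 t ht]
      ring
    have hmono : (∫ s in (0:ℝ)..t, ∑ k ∈ F, lam k * (2 * (inner ℝ (u s k)
        ((f - Bc (u s) (u s)) k) - ν * lam k * ‖u s k‖ ^ 2))) ≤
        ∫ s in (0:ℝ)..t, (-ν * (∑ k ∈ F, lam k ^ 2 * ‖u s k‖ ^ 2) +
          (-2 * (∑ k ∈ F, lam k * (inner ℝ (u s k) (Bc (u s) (u s) k) : ℝ)) +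
            hSq 0 f / ν)) := by
      apply intervalIntegral.integral_mono_on ht.1 ((hsum F _ i3).mono_set hsub)
        ((i1.const_mul _).add ((i2.const_mul _).add intervalIntegrable_const))
      intro s hs
      have h0 : ∑ k ∈ F, ‖f k‖ ^ 2 ≤ hSq 0 f := by
        have := finset_le_of_eW (lam_rpow_nonneg 0) hf F
        rw [hSq_eq]
        simpa [eSq] using this
      have h1 : (∑ k ∈ F, ‖f k‖ ^ 2) / ν ≤ hSq 0 f / ν := div_le_div_of_nonneg_right h0 hν.le
      refine le_trans ?_ (add_le_add_right (add_le_add_right h1 _) _)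
      rw [Finset.mul_sum, Finset.mul_sum, Finset.sum_div, ← Finset.sum_add_distrib,
        ← Finset.sum_add_distrib]
      refine Finset.sum_le_sum fun k _ => ?_
      change lam k * (2 * (inner ℝ (u s k) (f k - Bc (u s) (u s) k) - ν * lam k * ‖u s k‖ ^ 2)) ≤ _
      rw [inner_sub_right]
      have h4 := real_inner_le_norm (u s k) (f k)
      have hl := lam_pos k
      have h5 : 2 * (lam k * (‖u s k‖ * ‖f k‖)) ≤
          ν * (lam k ^ 2 * ‖u s k‖ ^ 2) + ‖f k‖ ^ 2 / ν := by
        have h6 : ν * (lam k ^ 2 * ‖u s k‖ ^ 2) + ‖f k‖ ^ 2 / ν -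
            2 * (lam k * (‖u s k‖ * ‖f k‖)) = (ν * lam k * ‖u s k‖ - ‖f k‖) ^ 2 / ν := by
          field_simp
          ring
        have h7 : 0 ≤ (ν * lam k * ‖u s k‖ - ‖f k‖) ^ 2 / ν := by positivity
        linarith
      have h8 := mul_le_mul_of_nonneg_left h4 hl.le
      have e : lam k * (2 * (inner ℝ (u s k) (f k) - inner ℝ (u s k) (Bc (u s) (u s) k) -
          ν * lam k * ‖u s k‖ ^ 2)) = 2 * (lam k * inner ℝ (u s k) (f k)) -
          2 * (lam k * inner ℝ (u s k) (Bc (u s) (u s) k)) -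
          2 * (ν * (lam k ^ 2 * ‖u s k‖ ^ 2)) := by ring
      rw [e]
      linarith
    rw [← hFT, intervalIntegral.integral_add (i1.const_mul _)
      ((i2.const_mul _).add intervalIntegrable_const),
      intervalIntegral.integral_add (i2.const_mul _) intervalIntegrable_const,
      intervalIntegral.integral_const_mul, intervalIntegral.integral_const_mul,
      intervalIntegral.integral_const] at hmono
    have h0 : ∑ k ∈ F, lam k * ‖u 0 k‖ ^ 2 ≤ hSq 1 θ := by
      have := finset_le_of_eW (lam_rpow_nonneg 1) hθ F
      rw [hSq_eq, h.init]
      simpa [eSq] using this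
    have h1 : (t - 0) • (hSq 0 f / ν) ≤ T * hSq 0 f / ν := by
      rw [smul_eq_mul, sub_zero, mul_div_assoc]
      exact mul_le_mul_of_nonneg_right ht.2 (div_nonneg (hSq_nonneg _ _) hν.le)
    linarith
  have hlim : ∀ t ∈ Icc (0:ℝ) T, Filter.Tendsto (fun F : Finset Freq => ∫ s in (0:ℝ)..t,
      ∑ k ∈ F, lam k * (inner ℝ (u s k) (Bc (u s) (u s) k) : ℝ)) Filter.atTop (nhds 0) := by
    intro t ht
    have hsub : uIcc 0 t ⊆ uIcc 0 T := by
      rw [uIcc_of_le hT.le, uIcc_of_le ht.1]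
      exact Icc_subset_Icc le_rfl ht.2
    have hI : ∀ s, s ∈ uIoc 0 t → s ∈ Ioc 0 T := by
      intro s hs
      rw [uIoc_of_le ht.1] at hs
      exact ⟨hs.1, hs.2.trans ht.2⟩
    have := intervalIntegral.tendsto_integral_filter_of_dominated_convergence
      (μ := volume) (a := 0) (b := t) (l := (Filter.atTop : Filter (Finset Freq)))
      (F := fun F s => ∑ k ∈ F, lam k * (inner ℝ (u s k) (Bc (u s) (u s) k) : ℝ))
      (f := fun _ => (0:ℝ)) (fun s => √(S4.toReal * M) * hSq 2 (u s)) ?_ ?_ ?_ ?_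
    · simpa using this
    · refine Filter.Eventually.of_forall fun F => ?_
      rw [uIoc_of_le ht.1]
      exact ((hsum F (fun k s => lam k * (inner ℝ (u s k) (Bc (u s) (u s) k) : ℝ))
        (fun k => (hB k).const_mul _)).mono_set hsub).1.aestronglyMeasurable
    · refine Filter.Eventually.of_forall fun F => Filter.Eventually.of_forall fun s hs => ?_
      have hs' := hI s hs
      exact r_bound hM0 (hM s (Ioc_subset_Icc_self hs')) (h.memL2H2.1 s hs').2 F
    · refine IntervalIntegrable.const_mul ?_ _
      refine IntervalIntegrable.mono_set ?_ hsub
      rw [intervalIntegrable_iff_integrableOn_Ioc_of_le hT.le]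
      exact h.memL2H2.2
    · refine Filter.Eventually.of_forall fun s hs => ?_
      have hs' := hI s hs
      exact cancel (h.real s (Ioc_subset_Icc_self hs'))
        ((finH_iff _ _).1 (h.memL2H2.1 s hs').2)
  have key2 : ∀ F : Finset Freq, ∀ t ∈ Icc (0:ℝ) T,
      (∑ k ∈ F, lam k * ‖u t k‖ ^ 2) + ν * (∫ s in (0:ℝ)..t, ∑ k ∈ F, lam k ^ 2 * ‖u s k‖ ^ 2)
        ≤ D := by
    intro F₀ t ht
    have hsub : uIcc 0 t ⊆ uIcc 0 T := by
      rw [uIcc_of_le hT.le, uIcc_of_le ht.1]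
      exact Icc_subset_Icc le_rfl ht.2
    have hl := ((hlim t ht).const_mul 2).const_sub D
    rw [mul_zero, sub_zero] at hl
    refine ge_of_tendsto hl ?_
    filter_upwards [Filter.eventually_ge_atTop F₀] with F hF
    refine le_trans (add_le_add ?_ (mul_le_mul_of_nonneg_left ?_ hν.le)) (key F t ht)
    · exact Finset.sum_le_sum_of_subset_of_nonneg hF fun k _ _ =>
        mul_nonneg (lam_pos k).le (by positivity)
    · apply intervalIntegral.integral_mono_on ht.1
        ((hsum F₀ (fun k s => lam k ^ 2 * ‖u s k‖ ^ 2) (fun k => hn2 k _)).mono_set hsub)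
        ((hsum F (fun k s => lam k ^ 2 * ‖u s k‖ ^ 2) (fun k => hn2 k _)).mono_set hsub)
      intro s _
      exact Finset.sum_le_sum_of_subset_of_nonneg hF fun k _ _ => by positivity
  constructor
  · intro t ht
    apply eW_le_of_finset (lam_rpow_nonneg 1)
    intro F
    have h1 := key2 F t ht
    have h2 : 0 ≤ ∫ s in (0:ℝ)..t, ∑ k ∈ F, lam k ^ 2 * ‖u s k‖ ^ 2 :=
      intervalIntegral.integral_nonneg ht.1 fun s _ => Finset.sum_nonneg fun k _ => by positivity
    have h3 := mul_nonneg hν.le h2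
    simp only [Real.rpow_one]
    linarith
  · apply lint_le hT.le hcont (lam_rpow_nonneg 2)
    intro F
    have h1 := key2 F T ⟨hT.le, le_rfl⟩
    have h2 : 0 ≤ ∑ k ∈ F, lam k * ‖u T k‖ ^ 2 := Finset.sum_nonneg fun k _ =>
        mul_nonneg (lam_pos k).le (by positivity)
    rw [le_div_iff₀ hν]
    simp only [Real.rpow_two]
    linarith

lemma int_of_lint {T X : ℝ} (hT : 0 ≤ T) (hX : 0 ≤ X) {φ : ℝ → ℝ≥0∞}
    (hm : AEMeasurable φ (volume.restrict (Ioc 0 T)))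
    (h : ∫⁻ t in Ioc 0 T, φ t ≤ ENNReal.ofReal X) :
    IntervalIntegrable (fun t => (φ t).toReal) volume 0 T ∧
      (∫ t in (0:ℝ)..T, (φ t).toReal) ≤ X ∧
      ∀ᵐ t ∂(volume.restrict (Ioc (0:ℝ) T)), φ t < ⊤ := by
  have hne : ∫⁻ t in Ioc 0 T, φ t ≠ ⊤ := ne_top_of_le_ne_top ENNReal.ofReal_ne_top h
  have hae := ae_lt_top' hm hne
  refine ⟨?_, ?_, hae⟩
  · rw [intervalIntegrable_iff_integrableOn_Ioc_of_le hT]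
    exact integrable_toReal_of_lintegral_ne_top hm hne
  · rw [intervalIntegral.integral_of_le hT, integral_toReal hm hae]
    exact ENNReal.toReal_le_of_le_ofReal hX h

lemma eW_lim {W' : Freq → ℝ} {c : Coef} {X : ℝ≥0∞}
    (h : ∀ F : Finset Freq, ∃ W : Freq → ℝ, (∀ k ∈ F, W k = W' k) ∧ eW W c ≤ X) :
    eW W' c ≤ X := by
  unfold eW
  rw [ENNReal.tsum_eq_iSup_sum]
  refine iSup_le fun F => ?_
  obtain ⟨W, h1, h2⟩ := h F
  refine le_trans (le_of_eq ?_) ((ENNReal.sum_le_tsum F).trans h2)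
  exact Finset.sum_congr rfl fun k hk => by rw [h1 k hk]

lemma lint_lim {T : ℝ} {W' : Freq → ℝ} {c : ℝ → Coef} {X : ℝ≥0∞}
    (hcont : ∀ k, ContinuousOn (fun s => c s k) (Icc 0 T))
    (h : ∀ F : Finset Freq, ∃ W : Freq → ℝ, (∀ k ∈ F, W k = W' k) ∧
      ∫⁻ t in Ioc 0 T, eW W (c t) ≤ X) :
    ∫⁻ t in Ioc 0 T, eW W' (c t) ≤ X := by
  have e : ∀ W : Freq → ℝ, ∫⁻ t in Ioc 0 T, eW W (c t) =
      ∑' k, ∫⁻ t in Ioc 0 T, ENNReal.ofReal (W k * ‖c t k‖ ^ 2) := by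
    intro W
    unfold eW
    rw [lintegral_tsum (fun k =>
      (((aem_coef hcont k).norm.pow_const 2).const_mul (W k)).ennreal_ofReal)]
  rw [e, ENNReal.tsum_eq_iSup_sum]
  refine iSup_le fun F => ?_
  obtain ⟨W, h1, h2⟩ := h F
  rw [e] at h2
  refine le_trans (le_of_eq ?_) ((ENNReal.sum_le_tsum F).trans h2)
  exact Finset.sum_congr rfl fun k hk => by rw [h1 k hk]

lemma Bnorm {v : ℤ × ℤ → ℝ} (hv : ∀ n, 0 ≤ v n) {b : Coef} {Z : ℤ × ℤ → ℝ≥0∞}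
    (h : ∀ k : Freq, ‖b k‖ₑ ≤ ENNReal.ofReal √(lam k) * Z k.1) :
    eW (fun k => v k.1 ^ 2 * (lam k)⁻¹) b ≤ ∑' k : Freq, (ENNReal.ofReal (v k.1) * Z k.1) ^ 2 := by
  unfold eW
  refine ENNReal.tsum_le_tsum fun k => ?_
  have hl := lam_pos k
  have hs := Real.sqrt_pos.2 hl
  have e : v k.1 ^ 2 * (lam k)⁻¹ = (v k.1 * (√(lam k))⁻¹) ^ 2 := by
    rw [mul_pow, inv_pow, Real.sq_sqrt hl.le]
  change ENNReal.ofReal (v k.1 ^ 2 * (lam k)⁻¹ * ‖b k‖ ^ 2) ≤ _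
  rw [e, ← ofReal_sq_enorm _ (mul_nonneg (hv _) (by positivity))]
  refine pow_le_pow_left' ?_ 2
  refine (mul_le_mul' le_rfl (h k)).trans (le_of_eq ?_)
  rw [← mul_assoc, ← ENNReal.ofReal_mul (mul_nonneg (hv _) (by positivity))]
  congr 2
  field_simp

/-- truncated weight -/
def ph (s N x : ℝ) : ℝ := x * min x N ^ (s - 1)

lemma ph_nonneg {s N x : ℝ} (hN : 0 ≤ N) (hx : 0 ≤ x) : 0 ≤ ph s N x :=
  mul_nonneg hx (Real.rpow_nonneg (le_min hx hN) _)

lemma ph_mono {s N x y : ℝ} (hs : 1 ≤ s) (hN : 0 ≤ N) (hx : 0 ≤ x) (h : x ≤ y) :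
    ph s N x ≤ ph s N y := by
  unfold ph
  have h0 : 0 ≤ min x N := le_min hx hN
  have h1 : min x N ≤ min y N := min_le_min_right N h
  exact mul_le_mul h (Real.rpow_le_rpow h0 h1 (by linarith)) (Real.rpow_nonneg h0 _) (hx.trans h)

lemma ph_four {s N x : ℝ} (hs : 1 ≤ s) (hN : 0 ≤ N) (hx : 0 ≤ x) :
    ph s N (4 * x) ≤ 4 ^ s * ph s N x := by
  unfold ph
  have h0 : 0 ≤ min x N := le_min hx hN
  have h1 : min (4 * x) N ≤ 4 * min x N := by
    rw [mul_min_of_nonneg _ _ (by norm_num)]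
    exact min_le_min_left _ (by linarith)
  have h2 : min (4 * x) N ^ (s - 1) ≤ 4 ^ (s - 1) * min x N ^ (s - 1) := by
    rw [← Real.mul_rpow (by norm_num) h0]
    exact Real.rpow_le_rpow (le_min (by linarith) hN) h1 (by linarith)
  calc 4 * x * min (4 * x) N ^ (s - 1) ≤ 4 * x * (4 ^ (s - 1) * min x N ^ (s - 1)) := by gcongr
    _ = (4 ^ (1:ℝ) * 4 ^ (s - 1)) * (x * min x N ^ (s - 1)) := by rw [Real.rpow_one]; ring
    _ = _ := by rw [← Real.rpow_add (by norm_num)]; congr 2; ring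

lemma ph_add {s N : ℝ} (hs : 1 ≤ s) (hN : 0 ≤ N) (m n : ℤ × ℤ) :
    √(ph s N (lamG (m + n))) ≤ √(4 ^ s) * (√(ph s N (lamG m)) + √(ph s N (lamG n))) := by
  have hm := lamG_nonneg m
  have hn := lamG_nonneg n
  have h1 := lamG_add m n
  have main : ∀ x : ℝ, 0 ≤ x → lamG (m + n) ≤ 4 * x →
      √(ph s N (lamG (m + n))) ≤ √(4 ^ s) * √(ph s N x) := by
    intro x hx h
    rw [← Real.sqrt_mul (by positivity)]
    exact Real.sqrt_le_sqrt ((ph_mono hs hN (lamG_nonneg _) h).trans (ph_four hs hN hx))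
  rcases le_total (lamG m) (lamG n) with h | h
  · refine (main _ hn (by linarith)).trans ?_
    gcongr
    linarith [Real.sqrt_nonneg (ph s N (lamG m))]
  · refine (main _ hm (by linarith)).trans ?_
    gcongr
    linarith [Real.sqrt_nonneg (ph s N (lamG n))]

lemma reg {T ν : ℝ} (hT : 0 < T) (hν : 0 < ν) {s : ℝ} (hs : 1 ≤ s) {f : Coef}
    (hf : eSq (s - 1) f ≠ ⊤) {R : ℝ} (hR : 0 ≤ R) :
    ∃ X : ℝ, 0 ≤ X ∧ ∀ (θ : Coef) (u : ℝ → Coef), eSq s θ ≤ ENNReal.ofReal R →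
      IsNSSol ν f T θ u →
      (∀ t ∈ Icc (0:ℝ) T, eSq s (u t) ≤ ENNReal.ofReal X) ∧
        ∫⁻ t in Ioc 0 T, eSq (s + 1) (u t) ≤ ENNReal.ofReal X := by
  have hf0 : eSq 0 f ≠ ⊤ := ne_top_of_le_ne_top hf (eSq_mono (by linarith) f)
  set D := R + T * hSq 0 f / ν with hD
  have hD0 : 0 ≤ D := by have := hSq_nonneg 0 f; positivity
  set K := 2 * (4 ^ s * (4 * S4.toReal)) with hK
  have hK0 : 0 ≤ K := by positivity
  set n := ⌈2 * (K / ν * (D / ν))⌉₊ with hn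
  set β := 2 * hSq (s - 1) f with hβ
  have hβ0 : 0 ≤ β := by have := hSq_nonneg (s - 1) f; positivity
  set A := R + β * T / ν with hA
  have hA0 : 0 ≤ A := by positivity
  refine ⟨2 ^ n * A + 2 ^ n * A / ν, by positivity, fun θ u hθ h => ?_⟩
  have hθ1 : eSq 1 θ ≤ ENNReal.ofReal R := (eSq_mono hs θ).trans hθ
  have hθ1' : eSq 1 θ ≠ ⊤ := ne_top_of_le_ne_top ENNReal.ofReal_ne_top hθ1
  have hθR : hSq 1 θ ≤ R := by
    rw [hSq_eq]; exact ENNReal.toReal_le_of_le_ofReal hR hθ1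
  have hcont := sol_cont h hθ1'
  obtain ⟨hb1, hb2⟩ := base hT hν h hθ1' hf0
  have hDD : hSq 1 θ + T * hSq 0 f / ν ≤ D := by rw [hD]; linarith
  have hb1' : ∀ t ∈ Icc (0:ℝ) T, eSq 1 (u t) ≤ ENNReal.ofReal D := fun t ht =>
    (hb1 t ht).trans (ENNReal.ofReal_le_ofReal hDD)
  have hb2' : ∫⁻ t in Ioc 0 T, eSq 2 (u t) ≤ ENNReal.ofReal (D / ν) :=
    hb2.trans (ENNReal.ofReal_le_ofReal (div_le_div_of_nonneg_right hDD hν.le))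
  obtain ⟨hi1, hi2, -⟩ := int_of_lint hT.le (div_nonneg hD0 hν.le) (aem_eW hcont _) hb2'
  have hgb : ∀ k, ∃ X : ℝ, ∀ t ∈ Ioc (0:ℝ) T, ‖(f - Bc (u t) (u t)) k‖ ≤ X := by
    intro k
    obtain ⟨X, hX⟩ := sol_gb h hθ1' k
    exact ⟨‖f k‖ + X, fun t ht => (norm_sub_le _ _).trans (add_le_add le_rfl (hX t ht))⟩
  have hen : ∀ N : ℝ, 1 ≤ N →
      (∀ t ∈ Icc (0:ℝ) T, eW (fun k => ph s N (lam k)) (u t) ≤ ENNReal.ofReal (2 ^ n * A)) ∧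
      ∫⁻ t in Ioc 0 T, eW (fun k => ph s N (lam k) * lam k) (u t) ≤
        ENNReal.ofReal (2 ^ n * A / ν) := by
    intro N hN
    have hN0 : 0 ≤ N := by linarith
    have hW : ∀ k, 0 ≤ ph s N (lam k) := fun k => ph_nonneg hN0 (lam_pos k).le
    have hWs : ∀ k, ph s N (lam k) ≤ lam k ^ s := by
      intro k
      have hl := lam_pos k
      have : lam k ^ s = lam k * lam k ^ (s - 1) := by
        rw [← Real.rpow_one_add' hl.le (by linarith)]; congr 1; ring
      rw [this]
      exact mul_le_mul_of_nonneg_left (Real.rpow_le_rpow (le_min hl.le hN0)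
        (min_le_left _ _) (by linarith)) hl.le
    refine energy (α := fun t => K * (eSq 2 (u t)).toReal) (β := β)
      (M := N ^ (s - 1) * D) hT hν hW hcont (sol_der h)
      (hi1.const_mul K) (fun t => mul_nonneg hK0 ENNReal.toReal_nonneg) hβ0 hgb ?_ ?_ ?_ ?_
    · rw [ae_restrict_iff' measurableSet_Ioc]
      refine Filter.Eventually.of_forall fun t ht => ?_
      have h2 : eSq 2 (u t) ≠ ⊤ := (finH_iff _ _).1 (h.memL2H2.1 t ht).2
      have hW' : ∀ k, 0 ≤ ph s N (lam k) * (lam k)⁻¹ := fun k =>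
        mul_nonneg (hW k) (inv_nonneg.2 (lam_pos k).le)
      refine (eW_sub_le hW' f (Bc (u t) (u t))).trans ?_
      rw [add_comm]
      refine add_le_add ?_ ?_
      · have hsq : ∀ k : Freq, √(ph s N (lamG k.1)) ^ 2 = ph s N (lam k) := fun k =>
          Real.sq_sqrt (hW k)
        have hB := Bnorm (v := fun n => √(ph s N (lamG n))) (fun n => Real.sqrt_nonneg _)
          (Bc_le2 (u t) (u t))
        have hP := prod_reg (v := fun n => √(ph s N (lamG n))) (fun n => Real.sqrt_nonneg _)
          (Real.sqrt_nonneg (4 ^ s)) (ph_add hs hN0) (u t)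
        have hBP := hB.trans hP
        simp only [hsq] at hBP
        refine (mul_le_mul' le_rfl hBP).trans (le_of_eq ?_)
        rw [← ENNReal.ofReal_pow (Real.sqrt_nonneg _), Real.sq_sqrt (by positivity), hK,
          ENNReal.ofReal_mul (by positivity), ENNReal.ofReal_mul (by positivity),
          ENNReal.ofReal_mul (by positivity), ENNReal.ofReal_mul (by positivity),
          ENNReal.ofReal_toReal S4_ne_top, ENNReal.ofReal_toReal h2]
        simp only [ENNReal.ofReal_ofNat]
        ring
      · rw [hβ, ENNReal.ofReal_mul (by norm_num), hSq_eq, ENNReal.ofReal_toReal hf,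
          ENNReal.ofReal_ofNat]
        refine mul_le_mul' le_rfl (eW_mono (fun k => ?_) f)
        have hl := lam_pos k
        unfold ph
        rw [mul_comm (lam k), mul_assoc, mul_inv_cancel₀ hl.ne', mul_one]
        exact Real.rpow_le_rpow (le_min hl.le hN0) (min_le_left _ _) (by linarith)
    · intro t ht
      rw [ENNReal.ofReal_mul (by positivity)]
      refine le_trans ?_ (mul_le_mul' le_rfl (hb1' t ht))
      rw [eSq, ← eW_const_mul (by positivity)]
      refine eW_mono (fun k => ?_) _
      have hl := lam_pos k
      unfold ph
      rw [Real.rpow_one, mul_comm]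
      exact mul_le_mul_of_nonneg_right (Real.rpow_le_rpow (le_min hl.le hN0)
        (min_le_right _ _) (by linarith)) hl.le
    · have e : (∫ t in (0:ℝ)..T, K * (eSq 2 (u t)).toReal / ν) =
          K / ν * ∫ t in (0:ℝ)..T, (eSq 2 (u t)).toReal := by
        rw [← intervalIntegral.integral_const_mul]
        congr 1; ext t; ring
      rw [e]
      have h1 : K / ν * (∫ t in (0:ℝ)..T, (eSq 2 (u t)).toReal) ≤ K / ν * (D / ν) :=
        mul_le_mul_of_nonneg_left hi2 (by positivity)
      have h2 := Nat.le_ceil (2 * (K / ν * (D / ν)))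
      rw [← hn] at h2
      linarith
    · rw [hA, h.init]
      gcongr
      apply ENNReal.toReal_le_of_le_ofReal hR
      exact (eW_mono hWs θ).trans hθ
  have hphN : ∀ F : Finset Freq, ∃ N : ℝ, 1 ≤ N ∧ ∀ k ∈ F, ph s N (lam k) = lam k ^ s := by
    intro F
    refine ⟨1 + ∑ k ∈ F, lam k, ?_, fun k hk => ?_⟩
    · have := Finset.sum_nonneg (s := F) (f := lam) fun k _ => (lam_pos k).le
      linarith
    · have hl := lam_pos k
      have h1 := Finset.single_le_sum (s := F) (f := lam) (fun k _ => (lam_pos k).le) hk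
      unfold ph
      rw [min_eq_left (by linarith), ← Real.rpow_one_add' hl.le (by linarith)]
      congr 1; ring
  constructor
  · intro t ht
    refine eW_lim fun F => ?_
    obtain ⟨N, hN, hk⟩ := hphN F
    refine ⟨_, hk, ((hen N hN).1 t ht).trans (ENNReal.ofReal_le_ofReal ?_)⟩
    have : 0 ≤ 2 ^ n * A / ν := by positivity
    linarith
  · refine lint_lim hcont fun F => ?_
    obtain ⟨N, hN, hk⟩ := hphN F
    refine ⟨fun k => ph s N (lam k) * lam k, fun k hkF => ?_,
      ((hen N hN).2).trans (ENNReal.ofReal_le_ofReal ?_)⟩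
    · simp only [hk k hkF]
      rw [Real.rpow_add (lam_pos k), Real.rpow_one]
    have : 0 ≤ 2 ^ n * A := by positivity
    linarith

/-- Proposition `PropNSLip`. Lipschitz continuity of the
Navier–Stokes solution map in the `Ḣ^a`-scale: for `a ∈ ℤ`, with
`a* = |a|+1` if `|a| ≤ 1` and `a* = |a|` if `|a| ≥ 2`, any `f ∈ Ḣ^{a*−1}_⋄`
and `B > 0`, there is `K > 0` such that for all `θ, θ' ∈ Ḣ^{a*}_⋄` with
`‖θ‖_{Ḣ^{a*}} + ‖θ'‖_{Ḣ^{a*}} ≤ B`,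
`sup_{0≤t≤T} ‖u_θ(t) − u_{θ'}(t)‖²_{Ḣ^a} + ∫₀ᵀ ‖u_θ − u_{θ'}‖²_{Ḣ^{a+1}} dt
  ≤ K ‖θ − θ'‖²_{Ḣ^a}`. -/
theorem statement3 (a : ℤ) (T ν : ℝ) (hT : 0 < T) (hν : 0 < ν)
    (f : Coef) (hf : MemH ((astar a : ℝ) - 1) f) (B : ℝ) (hB : 0 < B) :
    ∃ K : ℝ, 0 < K ∧
      ∀ (θ θ' : Coef) (u u' : ℝ → Coef),
        MemH (astar a : ℝ) θ → MemH (astar a : ℝ) θ' →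
        hN (astar a : ℝ) θ + hN (astar a : ℝ) θ' ≤ B →
        IsNSSol ν f T θ u → IsNSSol ν f T θ' u' →
          IntervalIntegrable (fun t => hSq ((a : ℝ) + 1) (u t - u' t)) volume 0 T ∧
          ∀ t ∈ Icc (0:ℝ) T,
            hSq (a : ℝ) (u t - u' t) +
              (∫ s in (0:ℝ)..T, hSq ((a : ℝ) + 1) (u s - u' s)) ≤
              K * hSq (a : ℝ) (θ - θ') := by
  have hs1 : (1:ℝ) ≤ (astar a : ℝ) ∧ (a:ℝ) ≤ (astar a : ℝ) := by
    have : 1 ≤ astar a ∧ a ≤ astar a := by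
      unfold astar
      have h1 := abs_nonneg a
      have h2 := le_abs_self a
      split_ifs with h
      · exact ⟨by omega, by omega⟩
      · exact ⟨by omega, by omega⟩
    exact ⟨by exact_mod_cast this.1, by exact_mod_cast this.2⟩
  obtain ⟨hs, has⟩ := hs1
  set s : ℝ := (astar a : ℝ) with hsdef
  obtain ⟨X, hX0, hX⟩ := reg hT hν hs ((finH_iff _ _).1 hf.2) (R := B ^ 2) (by positivity)
  obtain ⟨C, hC, hprod⟩ := prod_diff a
  set n := ⌈2 * (2 * C.toReal / ν * (2 * X))⌉₊ with hn
  refine ⟨2 ^ n * (1 + 1 / ν), by positivity, fun θ θ' u u' hθ hθ' hBB hu hu' => ?_⟩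
  have hR : ∀ θ : Coef, MemH s θ → hN s θ ≤ B → eSq s θ ≤ ENNReal.ofReal (B ^ 2) := by
    intro θ h1 h2
    rw [← ofReal_hSq h1.2, ← hN_sq]
    exact ENNReal.ofReal_le_ofReal (pow_le_pow_left₀ (Real.sqrt_nonneg _) h2 2)
  have hp1 : 0 ≤ hN s θ := Real.sqrt_nonneg _
  have hp2 : 0 ≤ hN s θ' := Real.sqrt_nonneg _
  have hRθ := hR θ hθ (by linarith)
  have hRθ' := hR θ' hθ' (by linarith)
  obtain ⟨hs_u, hi_u⟩ := hX θ u hRθ hu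
  obtain ⟨hs_u', hi_u'⟩ := hX θ' u' hRθ' hu'
  have hθ1 : eSq 1 θ ≠ ⊤ :=
    ne_top_of_le_ne_top ENNReal.ofReal_ne_top ((eSq_mono hs θ).trans hRθ)
  have hθ1' : eSq 1 θ' ≠ ⊤ :=
    ne_top_of_le_ne_top ENNReal.ofReal_ne_top ((eSq_mono hs θ').trans hRθ')
  have hc_u := sol_cont hu hθ1
  have hc_u' := sol_cont hu' hθ1'
  have hcont : ∀ k, ContinuousOn (fun t => (u t - u' t) k) (Icc 0 T) := fun k =>
    (hc_u k).sub (hc_u' k)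
  obtain ⟨ii, il, ia⟩ := int_of_lint hT.le hX0 (aem_eW hc_u _) hi_u
  obtain ⟨ii', il', ia'⟩ := int_of_lint hT.le hX0 (aem_eW hc_u' _) hi_u'
  have hgb : ∀ k, ∃ X : ℝ, ∀ t ∈ Ioc (0:ℝ) T, ‖(Bc (u' t) (u' t) - Bc (u t) (u t)) k‖ ≤ X := by
    intro k
    obtain ⟨X, hX⟩ := sol_gb hu hθ1 k
    obtain ⟨X', hX'⟩ := sol_gb hu' hθ1' k
    exact ⟨X' + X, fun t ht => (norm_sub_le _ _).trans (add_le_add (hX' t ht) (hX t ht))⟩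
  have hA0 : 0 ≤ hSq (a:ℝ) (θ - θ') := hSq_nonneg _ _
  have hvsq : ∀ k : Freq, (lamG k.1 ^ ((a:ℝ) / 2)) ^ 2 = lam k ^ (a:ℝ) := by
    intro k
    rw [← Real.rpow_natCast, ← Real.rpow_mul (lamG_nonneg _), ← lam_eq]
    congr 1
    push_cast
    ring
  have hen := energy (T := T) (ν := ν) (c := fun t => u t - u' t)
    (g := fun t => Bc (u' t) (u' t) - Bc (u t) (u t)) (W := fun k => lam k ^ (a:ℝ))
    (α := fun t => 2 * C.toReal * ((eSq (s + 1) (u t)).toReal + (eSq (s + 1) (u' t)).toReal))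
    (β := 0) (M := 4 * X) (n := n) (A := hSq (a:ℝ) (θ - θ')) hT hν (lam_rpow_nonneg _) hcont
    (by
      intro k t ht
      have h1 := (hu.deriv k t ht).sub (hu'.deriv k t ht)
      have h2 : HasDerivAt (fun r => (u r - u' r) k) _ t := h1
      refine h2.congr_deriv ?_
      change _ = Bc (u' t) (u' t) k - Bc (u t) (u t) k - _ * (u t k - u' t k)
      ring)
    ((ii.add ii').const_mul _)
    (fun t => by
      have h1 : 0 ≤ (eSq (s + 1) (u t)).toReal := ENNReal.toReal_nonneg
      have h2 : 0 ≤ (eSq (s + 1) (u' t)).toReal := ENNReal.toReal_nonneg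
      have h3 : 0 ≤ C.toReal := ENNReal.toReal_nonneg
      positivity)
    le_rfl hgb ?_ ?_ ?_ ?_
  · obtain ⟨he1, he2⟩ := hen
    have hW1 : (fun k => lam k ^ (a:ℝ) * lam k) = fun k : Freq => lam k ^ ((a:ℝ) + 1) := by
      ext k
      rw [Real.rpow_add (lam_pos k), Real.rpow_one]
    rw [hW1] at he2
    obtain ⟨j1, j2, -⟩ := int_of_lint hT.le (by positivity) (aem_eW hcont _) he2
    have e : (fun t => hSq ((a:ℝ) + 1) (u t - u' t)) =
        fun t => (eW (fun k => lam k ^ ((a:ℝ) + 1)) (u t - u' t)).toReal := by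
      ext t; exact hSq_eq _ _
    rw [e]
    refine ⟨j1, fun t ht => ?_⟩
    have h1 : hSq (a:ℝ) (u t - u' t) ≤ 2 ^ n * hSq (a:ℝ) (θ - θ') := by
      rw [hSq_eq (a:ℝ) (u t - u' t)]
      exact ENNReal.toReal_le_of_le_ofReal (by positivity) (he1 t ht)
    have h2 : 2 ^ n * (1 + 1 / ν) * hSq (a:ℝ) (θ - θ') =
        2 ^ n * hSq (a:ℝ) (θ - θ') + 2 ^ n * hSq (a:ℝ) (θ - θ') / ν := by ring
    rw [h2]
    exact add_le_add h1 j2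
  · filter_upwards [ia, ia', ae_restrict_mem measurableSet_Ioc] with t h1 h2 ht
    have ht' := Ioc_subset_Icc_self ht
    have f0 : eSq 0 (u t) ≠ ⊤ := ne_top_of_le_ne_top (sol_fin hu hθ1 t ht')
      (eSq_mono zero_le_one _)
    have f0' : eSq 0 (u' t) ≠ ⊤ := ne_top_of_le_ne_top (sol_fin hu' hθ1' t ht')
      (eSq_mono zero_le_one _)
    have hb : ∀ k : Freq, ‖(Bc (u' t) (u' t) - Bc (u t) (u t)) k‖ₑ ≤ ENNReal.ofReal √(lam k) *
        (conv (ec (u t)) (ec (u t - u' t)) k.1 + conv (ec (u' t)) (ec (u t - u' t)) k.1) := by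
      intro k
      have := Bc_sub_le f0 f0 f0' f0' k
      rw [conv_comm (ec (u t - u' t))] at this
      change ‖Bc (u' t) (u' t) k - Bc (u t) (u t) k‖ₑ ≤ _
      rw [enorm_sub_rev]
      exact this
    have hB := Bnorm (v := fun n => lamG n ^ ((a:ℝ) / 2))
      (Z := fun k => conv (ec (u t)) (ec (u t - u' t)) k + conv (ec (u' t)) (ec (u t - u' t)) k)
      (fun n => Real.rpow_nonneg (lamG_nonneg n) _) hb
    simp only [hvsq] at hB
    refine hB.trans ?_
    calc _ ≤ ∑' k : Freq, (2 * (ENNReal.ofReal (lamG k.1 ^ ((a:ℝ) / 2)) *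
            conv (ec (u t)) (ec (u t - u' t)) k.1) ^ 2 +
          2 * (ENNReal.ofReal (lamG k.1 ^ ((a:ℝ) / 2)) *
            conv (ec (u' t)) (ec (u t - u' t)) k.1) ^ 2) := by
          refine ENNReal.tsum_le_tsum fun k => ?_
          rw [mul_add]
          exact add_sq_le _ _
      _ ≤ 2 * (C * (eSq (s + 1) (u t) * eSq (a:ℝ) (u t - u' t))) +
          2 * (C * (eSq (s + 1) (u' t) * eSq (a:ℝ) (u t - u' t))) := by
          rw [ENNReal.tsum_add, ENNReal.tsum_mul_left, ENNReal.tsum_mul_left]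
          exact add_le_add (mul_le_mul' le_rfl (hprod _ _)) (mul_le_mul' le_rfl (hprod _ _))
      _ = _ := by
          have h1' : eSq (s + 1) (u t) ≠ ⊤ := h1.ne
          have h2' : eSq (s + 1) (u' t) ≠ ⊤ := h2.ne
          rw [ENNReal.ofReal_mul (by positivity), ENNReal.ofReal_mul (by positivity),
            ENNReal.ofReal_add ENNReal.toReal_nonneg ENNReal.toReal_nonneg,
            ENNReal.ofReal_toReal hC, ENNReal.ofReal_toReal h1', ENNReal.ofReal_toReal h2',
            ENNReal.ofReal_zero, ENNReal.ofReal_ofNat]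
          change _ = _ * eSq (a:ℝ) (u t - u' t) + 0
          ring
  · intro t ht
    change eSq (a:ℝ) (u t - u' t) ≤ _
    refine (eSq_mono has _).trans ((eSq_sub_le _ _ _).trans ?_)
    refine (add_le_add (mul_le_mul' le_rfl (hs_u t ht)) (mul_le_mul' le_rfl (hs_u' t ht))).trans
      (le_of_eq ?_)
    rw [ENNReal.ofReal_mul (by norm_num), ENNReal.ofReal_ofNat]
    ring
  · have e : (∫ t in (0:ℝ)..T, 2 * C.toReal * ((eSq (s + 1) (u t)).toReal +
        (eSq (s + 1) (u' t)).toReal) / ν) = 2 * C.toReal / ν *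
        ((∫ t in (0:ℝ)..T, (eSq (s + 1) (u t)).toReal) +
          ∫ t in (0:ℝ)..T, (eSq (s + 1) (u' t)).toReal) := by
      have := intervalIntegral.integral_add ii ii'
      refine Eq.trans ?_ (congrArg (fun z => 2 * C.toReal / ν * z) this)
      rw [← intervalIntegral.integral_const_mul]
      congr 1; ext t
      simp only [eSq]
      ring
    rw [e]
    have h0 : 0 ≤ 2 * C.toReal / ν := by positivity
    have h1 := mul_le_mul_of_nonneg_left (add_le_add il il') h0
    have h2 := Nat.le_ceil (2 * (2 * C.toReal / ν * (2 * X)))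
    rw [← hn] at h2
    have h3 : 2 * C.toReal / ν * (X + X) = 2 * C.toReal / ν * (2 * X) := by ring
    rw [h3] at h1
    refine le_trans h1 ?_
    linarith
  · simp only [hu.init, hu'.init, zero_mul, zero_div, add_zero]
    rw [hSq_eq]
    exact le_rfl

end NS2D
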